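/- arXiv:2306.00334 — 2 statements merged into one kernel-verified Lean document; each statement's English description precedes it below -/
import Mathlib

section
/- Let F be a totally real number field and L a positive definite integral O_F-lattice of class number one, and n a positive integer. (i) If L is locally n-ADC, then L is globally n-ADC. (ii) If L is O_F-maximal, then L is globally n-ADC. -/
/-
Quadratic lattices over (local and global) fields, following
"On n-ADC integral quadratic lattices over totally real number fields".

A non-archimedean local field of characteristic ≠ 2 is formalized as a field `K`
together with a valuation subring `O` of `K` which is a complete discrete valuation
ring with finite residue field (completeness is expressed as adic completeness with
respect to the maximal ideal); `K` is automatically the fraction field of `O`.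
-/

noncomputable section

namespace QLat

variable {K : Type} [Field K]

/-- The bilinear form associated to a quadratic form `Q`, i.e. `B x y = (Q(x+y)-Q(x)-Q(y))/2`,
so that `B x x = Q x`. -/
def bil {V : Type} [AddCommGroup V] [Module K V] (Q : QuadraticForm K V) (x y : V) : K :=
  (2 : K)⁻¹ * QuadraticMap.polar (⇑Q) x y

/-- A quadratic form (space) is nondegenerate. -/
def Nondeg {V : Type} [AddCommGroup V] [Module K V] (Q : QuadraticForm K V) : Prop :=
  ∀ x : V, (∀ y : V, QuadraticMap.polar (⇑Q) x y = 0) → x = 0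

/-- The `O`-span of a subset `t` of a `K`-vector space: all finite `O`-linear
combinations of elements of `t`. -/
def ospan (O : Subring K) {V : Type} [AddCommGroup V] [Module K V] (t : Set V) : Set V :=
  {x | ∃ (m : ℕ) (c : Fin m → K) (g : Fin m → V),
    (∀ i, c i ∈ O) ∧ (∀ i, g i ∈ t) ∧ x = ∑ i, c i • g i}

/-- An `O`-lattice in `V`: a finitely generated `O`-submodule of `V`. -/
def IsLattice (O : Subring K) {V : Type} [AddCommGroup V] [Module K V] (L : Set V) : Prop :=
  ∃ t : Finset V, L = ospan O (t : Set V)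

/-- An `O`-lattice on `V`: a finitely generated `O`-submodule of `V` spanning `V` over `K`. -/
def IsLatticeOn (O : Subring K) {V : Type} [AddCommGroup V] [Module K V] (L : Set V) : Prop :=
  IsLattice O L ∧ Submodule.span K L = ⊤

/-- The lattice `L` is integral: `𝔫(L) ⊆ O`, i.e. all values of `Q` on `L` lie in `O`. -/
def IsIntegral (O : Subring K) {V : Type} [AddCommGroup V] [Module K V]
    (Q : QuadraticForm K V) (L : Set V) : Prop :=
  ∀ x ∈ L, Q x ∈ O

/-- The quadratic space `(V,Q)` represents the quadratic space `(W,Q')`. -/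
def SpaceRep {W V : Type} [AddCommGroup W] [Module K W] [AddCommGroup V] [Module K V]
    (Q' : QuadraticForm K W) (Q : QuadraticForm K V) : Prop :=
  ∃ σ : W →ₗ[K] V, Function.Injective σ ∧ ∀ x, Q (σ x) = Q' x

/-- The quadratic spaces `(W,Q')` and `(V,Q)` are isometric. -/
def SpaceIsom {W V : Type} [AddCommGroup W] [Module K W] [AddCommGroup V] [Module K V]
    (Q' : QuadraticForm K W) (Q : QuadraticForm K V) : Prop :=
  ∃ σ : W ≃ₗ[K] V, ∀ x, Q (σ x) = Q' x

/-- The lattice `M` (in `(V,Q)`) represents the lattice `N` (a full lattice in `(W,Q')`):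
there is an injective form-preserving `K`-linear map carrying `N` into `M`.  (For a full
lattice `N` this is equivalent to the existence of an injective form-preserving
`O`-linear map `N → M`, since `K` is the fraction field of `O`.) -/
def LatRep {W V : Type} [AddCommGroup W] [Module K W] [AddCommGroup V] [Module K V]
    (Q' : QuadraticForm K W) (Q : QuadraticForm K V) (N : Set W) (M : Set V) : Prop :=
  ∃ σ : W →ₗ[K] V, Function.Injective σ ∧ (∀ x, Q (σ x) = Q' x) ∧ σ '' N ⊆ M

/-- The lattices `N` (full in `(W,Q')`) and `M` (in `(V,Q)`) are isometric. -/
def LatIsom {W V : Type} [AddCommGroup W] [Module K W] [AddCommGroup V] [Module K V]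
    (Q' : QuadraticForm K W) (Q : QuadraticForm K V) (N : Set W) (M : Set V) : Prop :=
  ∃ σ : W →ₗ[K] V, Function.Injective σ ∧ (∀ x, Q (σ x) = Q' x) ∧ σ '' N = M

/-- The lattice `L` is `O`-maximal: it is integral and is not properly contained in any
(finitely generated) lattice on the same subspace with integral norm. -/
def IsMaximal (O : Subring K) {V : Type} [AddCommGroup V] [Module K V]
    (Q : QuadraticForm K V) (L : Set V) : Prop :=
  IsIntegral O Q L ∧
    ∀ L' : Set V, IsLattice O L' → Submodule.span K L' = Submodule.span K L →
      L ⊆ L' → IsIntegral O Q L' → L' = L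

/-- The lattice `L` is `n`-ADC: every integral `O`-lattice `N` of rank `n` (on a
nondegenerate quadratic space `W` of dimension `n`) whose ambient space is represented by
the space `(V,Q) = K·L` is represented by `L`. -/
def IsADC (O : Subring K) {V : Type} [AddCommGroup V] [Module K V]
    (Q : QuadraticForm K V) (L : Set V) (n : ℕ) : Prop :=
  ∀ (W : Type) [AddCommGroup W] [Module K W] (Q' : QuadraticForm K W),
    Nondeg Q' → Module.finrank K W = n →
    ∀ N : Set W, IsLatticeOn O N → IsIntegral O Q' N →
      SpaceRep Q' Q → LatRep Q' Q N L

/-- The lattice `L` is `n`-universal: it represents every integral `O`-lattice of rank `n`. -/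
def IsUniversal (O : Subring K) {V : Type} [AddCommGroup V] [Module K V]
    (Q : QuadraticForm K V) (L : Set V) (n : ℕ) : Prop :=
  ∀ (W : Type) [AddCommGroup W] [Module K W] (Q' : QuadraticForm K W),
    Nondeg Q' → Module.finrank K W = n →
    ∀ N : Set W, IsLatticeOn O N → IsIntegral O Q' N → LatRep Q' Q N L

end QLat

open scoped TensorProduct
open IsDedekindDomain

namespace QGlob

/-- Scalar-commutation instance for the completed field, registered to help instance
search for modules over `F_v`. -/
noncomputable instance (F : Type) [Field F] [NumberField F]
    (v : HeightOneSpectrum (NumberField.RingOfIntegers F)) :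
    SMulCommClass F (v.adicCompletion F) (v.adicCompletion F) :=
  Algebra.to_smulCommClass


variable (F : Type) [Field F] [NumberField F]

/-- `F` is totally real: every infinite place of `F` is real. -/
def TotallyReal : Prop := ∀ v : NumberField.InfinitePlace F, v.IsReal

/-- The ring of integers `O_F` of `F`, as a subring of `F`. -/
def OF : Subring F := (integralClosure ℤ F).toSubring

/-- A quadratic form over the totally real field `F` is positive definite if its values
at nonzero vectors are positive under every real embedding of `F`. -/
def PosDef {V : Type} [AddCommGroup V] [Module F V] (Q : QuadraticForm F V) : Prop :=
  ∀ (φ : F →+* ℝ) (x : V), x ≠ 0 → 0 < φ (Q x)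

/-- The completion `F_v` of `F` at a finite place `v`. -/
abbrev Fv (v : HeightOneSpectrum (NumberField.RingOfIntegers F)) : Type :=
  v.adicCompletion F

/-- The ring of integers of `F_v`, as a subring of `F_v`. -/
def Ov (v : HeightOneSpectrum (NumberField.RingOfIntegers F)) : Subring (Fv F v) :=
  (v.adicCompletionIntegers F).toSubring

/-- The completion `V_v = F_v ⊗_F V` of a quadratic space `V` over `F` at `v`. -/
abbrev Vv (V : Type) [AddCommGroup V] [Module F V]
    (v : HeightOneSpectrum (NumberField.RingOfIntegers F)) : Type :=
  (Fv F v) ⊗[F] V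

/-- The extension of a quadratic form `Q` on `V` to `V_v`. -/
noncomputable def Qv {V : Type} [AddCommGroup V] [Module F V] (Q : QuadraticForm F V)
    (v : HeightOneSpectrum (NumberField.RingOfIntegers F)) :
    QuadraticForm (Fv F v) (Vv F V v) :=
  letI : Invertible (2 : F) := invertibleOfNonzero two_ne_zero
  Q.baseChange (Fv F v)

/-- The canonical map `V → V_v`. -/
noncomputable def toVv {V : Type} [AddCommGroup V] [Module F V]
    (v : HeightOneSpectrum (NumberField.RingOfIntegers F)) : V → Vv F V v :=
  fun x => (1 : Fv F v) ⊗ₜ[F] x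

/-- The completion `L_v = O_{F_v} ⊗ L` of a lattice `L ⊆ V` at `v`, i.e. the
`O_{F_v}`-span of the image of `L` in `V_v`. -/
noncomputable def Lv {V : Type} [AddCommGroup V] [Module F V] (L : Set V)
    (v : HeightOneSpectrum (NumberField.RingOfIntegers F)) : Set (Vv F V v) :=
  QLat.ospan (Ov F v) (toVv F v '' L)

variable {V : Type} [AddCommGroup V] [Module F V]

/-- `L` is globally `n`-ADC: every positive definite integral `O_F`-lattice `N` of rank
`n` whose ambient space `F·N` is represented by `F·L` is represented by `L`. -/
def IsGlobADC (Q : QuadraticForm F V) (L : Set V) (n : ℕ) : Prop :=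
  ∀ (W : Type) [AddCommGroup W] [Module F W] (Q' : QuadraticForm F W),
    QLat.Nondeg Q' → PosDef F Q' → Module.finrank F W = n →
    ∀ N : Set W, QLat.IsLatticeOn (OF F) N → QLat.IsIntegral (OF F) Q' N →
      QLat.SpaceRep Q' Q → QLat.LatRep Q' Q N L

/-- `L` is globally `n`-universal: it represents every positive definite integral
`O_F`-lattice of rank `n`. -/
def IsGlobUniversal (Q : QuadraticForm F V) (L : Set V) (n : ℕ) : Prop :=
  ∀ (W : Type) [AddCommGroup W] [Module F W] (Q' : QuadraticForm F W),
    QLat.Nondeg Q' → PosDef F Q' → Module.finrank F W = n →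
    ∀ N : Set W, QLat.IsLatticeOn (OF F) N → QLat.IsIntegral (OF F) Q' N →
      QLat.LatRep Q' Q N L

/-- `L` is `n`-regular: it represents every positive definite integral `O_F`-lattice `N`
of rank `n` which is represented by `L` locally at every finite place. -/
def IsNRegular (Q : QuadraticForm F V) (L : Set V) (n : ℕ) : Prop :=
  ∀ (W : Type) [AddCommGroup W] [Module F W] (Q' : QuadraticForm F W),
    QLat.Nondeg Q' → PosDef F Q' → Module.finrank F W = n →
    ∀ N : Set W, QLat.IsLatticeOn (OF F) N → QLat.IsIntegral (OF F) Q' N →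
      (∀ v : HeightOneSpectrum (NumberField.RingOfIntegers F),
        QLat.LatRep (Qv F Q' v) (Qv F Q v) (Lv F N v) (Lv F L v)) →
      QLat.LatRep Q' Q N L

/-- `L` is locally `n`-ADC: `L_v` is `n`-ADC for every finite place `v`. -/
def IsLocADC (Q : QuadraticForm F V) (L : Set V) (n : ℕ) : Prop :=
  ∀ v : HeightOneSpectrum (NumberField.RingOfIntegers F),
    QLat.IsADC (Ov F v) (Qv F Q v) (Lv F L v) n

/-- `L` is locally `n`-universal: `L_v` is `n`-universal for every finite place `v`. -/
def IsLocUniversal (Q : QuadraticForm F V) (L : Set V) (n : ℕ) : Prop :=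
  ∀ v : HeightOneSpectrum (NumberField.RingOfIntegers F),
    QLat.IsUniversal (Ov F v) (Qv F Q v) (Lv F L v) n

/-- `L` has class number one: every `O_F`-lattice in the genus of `L` (i.e. every lattice
on a space isometric to `F·L` which is isometric to `L` at every finite place) is
isometric to `L`. -/
def ClassNumberOne (Q : QuadraticForm F V) (L : Set V) : Prop :=
  ∀ (W : Type) [AddCommGroup W] [Module F W] (Q' : QuadraticForm F W),
    QLat.Nondeg Q' →
    ∀ N : Set W, QLat.IsLatticeOn (OF F) N →
      QLat.SpaceIsom Q' Q →
      (∀ v : HeightOneSpectrum (NumberField.RingOfIntegers F),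
        QLat.LatIsom (Qv F Q' v) (Qv F Q v) (Lv F N v) (Lv F L v)) →
      QLat.LatIsom Q' Q N L

end QGlob

open QLat QGlob

namespace QPf

section Generic

variable {K : Type} [Field K] {V : Type} [AddCommGroup V] [Module K V]

/-- The reflection in an anisotropic vector. -/
lemma exists_reflection (Q : QuadraticForm K V) (a : V) (ha : Q a ≠ 0) :
    ∃ r : V ≃ₗ[K] V, (∀ x, Q (r x) = Q x) ∧
      ∀ x, r x = x - ((Q a)⁻¹ * QuadraticMap.polar Q a x) • a := by
  have h2 : ((Q a)⁻¹ • Q.polarBilin a) a = 2 := by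
    simp [QuadraticMap.polar_self]
    field_simp
  refine ⟨Module.reflection h2, fun x => ?_, fun x => ?_⟩
  · have hr : Module.reflection h2 x = x + (-((Q a)⁻¹ * QuadraticMap.polar Q a x)) • a := by
      simp [Module.reflection_apply, sub_eq_add_neg]
    rw [hr, QuadraticMap.map_add Q, QuadraticMap.map_smul, QuadraticMap.polar_smul_right,
      QuadraticMap.polar_comm Q x a]
    simp only [smul_eq_mul]
    field_simp
    ring
  · simp [Module.reflection_apply]

lemma polar_isom (Q : QuadraticForm K V) (g : V → V) (hadd : ∀ x y, g (x + y) = g x + g y)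
    (hg : ∀ x, Q (g x) = Q x) (x y : V) :
    QuadraticMap.polar Q (g x) (g y) = QuadraticMap.polar Q x y := by
  simp [QuadraticMap.polar, ← hadd, hg]

lemma witt_fin (h2 : (2 : K) ≠ 0) (Q : QuadraticForm K V) : ∀ (n : ℕ) (x y : Fin n → V),
    (∀ i j, i ≠ j → QuadraticMap.polar Q (x i) (x j) = 0) →
    (∀ i j, i ≠ j → QuadraticMap.polar Q (y i) (y j) = 0) →
    (∀ i, Q (x i) = Q (y i)) → (∀ i, Q (y i) ≠ 0) →
    ∃ g : V ≃ₗ[K] V, (∀ v, Q (g v) = Q v) ∧ ∀ i, g (x i) = y i := by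
  intro n
  induction n with
  | zero => intro x y _ _ _ _; exact ⟨LinearEquiv.refl K V, fun v => rfl, fun i => i.elim0⟩
  | succ n ih =>
    intro x y hx hy hxy hne
    obtain ⟨g, hg, hgx⟩ := ih (fun i => x i.castSucc) (fun i => y i.castSucc)
      (fun i j hij => hx _ _ (by simpa using hij)) (fun i j hij => hy _ _ (by simpa using hij))
      (fun i => hxy _) (fun i => hne _)
    set z := g (x (Fin.last n)) with hz
    set w := y (Fin.last n) with hw
    have hQz : Q z = Q w := by rw [hz, hg, hxy]
    have hw0 : Q w ≠ 0 := hne _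
    have hzo : ∀ i : Fin n, QuadraticMap.polar Q z (y i.castSucc) = 0 := by
      intro i
      rw [← hgx i, hz, polar_isom Q g (map_add g) hg]
      exact hx _ _ (Fin.castSucc_lt_last i).ne'
    have hwo : ∀ i : Fin n, QuadraticMap.polar Q w (y i.castSucc) = 0 :=
      fun i => hy _ _ (Fin.castSucc_lt_last i).ne'
    have key : ∃ h : V ≃ₗ[K] V, (∀ v, Q (h v) = Q v) ∧ h z = w ∧
        ∀ i : Fin n, h (y i.castSucc) = y i.castSucc := by
      have e1 : Q (z + w) = Q z + Q w + QuadraticMap.polar Q z w := QuadraticMap.map_add Q z w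
      have e2 : Q (z - w) = Q z + Q w - QuadraticMap.polar Q z w := by
        rw [sub_eq_add_neg, QuadraticMap.map_add Q, QuadraticMap.map_neg,
          QuadraticMap.polar_neg_right]; ring
      have p1 : QuadraticMap.polar Q z z = 2 * Q z := by simp [QuadraticMap.polar_self]
      have p2 : QuadraticMap.polar Q w w = 2 * Q w := by simp [QuadraticMap.polar_self]
      by_cases hm : Q (z - w) = 0
      · have hp : Q (z + w) ≠ 0 := by
          intro h0
          have : 2 * 2 * Q w = 0 := by
            have := congrArg₂ (· + ·) hm h0
            simp only [e1, e2, hQz] at this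
            linear_combination this
          simp [h2, hw0] at this
        obtain ⟨r, hr, hrx⟩ := exists_reflection Q (z + w) hp
        obtain ⟨s, hs, hsx⟩ := exists_reflection Q w hw0
        refine ⟨r.trans s, fun v => by simp [hs, hr], ?_, fun i => ?_⟩
        · have h1 : r z = -w := by
            rw [hrx, QuadraticMap.polar_add_left, QuadraticMap.polar_comm Q w z, p1]
            have : (Q (z + w))⁻¹ * (2 * Q z + QuadraticMap.polar Q z w) = 1 := by
              rw [inv_mul_eq_one₀ hp, e1, hQz]; ring
            rw [this]; simp
          rw [LinearEquiv.trans_apply, h1, map_neg, hsx, p2]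
          have : (Q w)⁻¹ * (2 * Q w) = 2 := by field_simp
          rw [this, two_smul]; abel
        · rw [LinearEquiv.trans_apply, hrx, QuadraticMap.polar_add_left, hzo, hwo]
          simp [hsx, hwo]
      · obtain ⟨r, hr, hrx⟩ := exists_reflection Q (z - w) hm
        refine ⟨r, hr, ?_, fun i => ?_⟩
        · rw [hrx, QuadraticMap.polar_sub_left, QuadraticMap.polar_comm Q w z, p1]
          have : (Q (z - w))⁻¹ * (2 * Q z - QuadraticMap.polar Q z w) = 1 := by
            rw [inv_mul_eq_one₀ hm, e2, hQz]; ring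
          rw [this]; simp
        · rw [hrx, QuadraticMap.polar_sub_left, hzo, hwo]; simp
    obtain ⟨h, hh, hhz, hhy⟩ := key
    refine ⟨g.trans h, fun v => by simp [hh, hg], fun i => ?_⟩
    refine Fin.lastCases ?_ (fun i => ?_) i
    · simpa [hz] using hhz
    · rw [LinearEquiv.trans_apply, hgx, hhy]

/-- Witt's extension theorem for embeddings of a nondegenerate space. -/
lemma witt (h2 : (2 : K) ≠ 0) {W : Type} [AddCommGroup W] [Module K W] [FiniteDimensional K W]
    (Q' : QuadraticForm K W) (hQ' : QLat.Nondeg Q') (Q : QuadraticForm K V)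
    (σ τ : W →ₗ[K] V) (hσ : ∀ x, Q (σ x) = Q' x) (hτ : ∀ x, Q (τ x) = Q' x) :
    ∃ g : V ≃ₗ[K] V, (∀ v, Q (g v) = Q v) ∧ ∀ w, g (σ w) = τ w := by
  have : Invertible (2 : K) := invertibleOfNonzero h2
  have hsym : LinearMap.IsSymm Q'.polarBilin :=
    ⟨fun x y => by simp [QuadraticMap.polar_comm Q' x y]⟩
  obtain ⟨b, hb⟩ := LinearMap.BilinForm.exists_orthogonal_basis hsym
  have hbo : ∀ i j, i ≠ j → QuadraticMap.polar Q' (b i) (b j) = 0 := by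
    intro i j hij
    have := hb hij
    simpa [Function.onFun] using this
  have hbn : ∀ i, Q' (b i) ≠ 0 := by
    intro i h0
    refine b.ne_zero i (hQ' _ fun y => ?_)
    have : ∀ y, Q'.polarBilin (b i) y = 0 := by
      intro y
      have : Q'.polarBilin (b i) = 0 := by
        refine b.ext fun j => ?_
        by_cases hij : i = j
        · subst hij; simp [QuadraticMap.polar_self, h0]
        · simpa using hbo i j hij
      simp [this]
    simpa using this y
  have hpol : ∀ (ρ : W →ₗ[K] V), (∀ x, Q (ρ x) = Q' x) → ∀ x y,
      QuadraticMap.polar Q (ρ x) (ρ y) = QuadraticMap.polar Q' x y := by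
    intro ρ hρ x y; simp [QuadraticMap.polar, ← map_add, hρ]
  obtain ⟨g, hg, hgx⟩ := witt_fin h2 Q _ (fun i => σ (b i)) (fun i => τ (b i))
    (fun i j hij => by rw [hpol σ hσ]; exact hbo i j hij)
    (fun i j hij => by rw [hpol τ hτ]; exact hbo i j hij)
    (fun i => by rw [hσ, hτ]) (fun i => by rw [hτ]; exact hbn i)
  refine ⟨g, hg, fun w => ?_⟩
  have : (g : V →ₗ[K] V) ∘ₗ σ = τ := b.ext fun i => by simpa using hgx i
  exact LinearMap.congr_fun this w

end Generic

end QPf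

namespace QPf

section Lat

variable {K : Type} [Field K] {O : Subring K} {V : Type} [AddCommGroup V] [Module K V]

lemma smem (L : Submodule O V) {c : K} (hc : c ∈ O) {x : V} (hx : x ∈ L) : c • x ∈ L :=
  L.smul_mem ⟨c, hc⟩ hx

/-- Integrality of a submodule. -/
def Integ (Q : QuadraticForm K V) (L : Submodule O V) : Prop := ∀ x ∈ L, Q x ∈ O

/-- The submodule spans the space. -/
def Full (L : Submodule O V) : Prop := ∀ x : V, ∃ c ∈ O, c ≠ 0 ∧ c • x ∈ L

/-- Maximality among all integral submodules. -/
def Max (Q : QuadraticForm K V) (L : Submodule O V) : Prop :=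
  Integ Q L ∧ Full L ∧ ∀ L' : Submodule O V, L ≤ L' → Integ Q L' → L' ≤ L

lemma polar_mem {Q : QuadraticForm K V} {L : Submodule O V} (h : Integ Q L) {x y : V}
    (hx : x ∈ L) (hy : y ∈ L) : QuadraticMap.polar Q x y ∈ O :=
  O.sub_mem (O.sub_mem (h _ (L.add_mem hx hy)) (h _ hx)) (h _ hy)

lemma absorb {A B : Submodule O V} (hA : A.FG) (hB : Full B) :
    ∃ c ∈ O, c ≠ 0 ∧ ∀ x ∈ A, c • x ∈ B := by
  induction A, hA using Submodule.fg_induction with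
  | singleton x =>
    obtain ⟨c, hc, h0, hx⟩ := hB x
    refine ⟨c, hc, h0, fun y hy => ?_⟩
    obtain ⟨a, rfl⟩ := Submodule.mem_span_singleton.1 hy
    rw [smul_comm]
    exact B.smul_mem a hx
  | sup N₁ N₂ h1 h2 i1 i2 =>
    obtain ⟨c, hc, h0, hx⟩ := i1
    obtain ⟨d, hd, k0, hy⟩ := i2
    refine ⟨c * d, O.mul_mem hc hd, mul_ne_zero h0 k0, fun z hz => ?_⟩
    obtain ⟨x, hx', y, hy', rfl⟩ := Submodule.mem_sup.1 hz
    rw [smul_add]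
    refine B.add_mem ?_ ?_
    · rw [mul_comm, mul_smul]; exact smem B hd (hx x hx')
    · rw [mul_smul]; exact smem B hc (hy y hy')

lemma exists_max {Q : QuadraticForm K V} {L : Submodule O V} (h : Integ Q L) (hf : Full L) :
    ∃ M : Submodule O V, Max Q M ∧ L ≤ M := by
  obtain ⟨M, hLM, hM⟩ := zorn_le_nonempty₀ {M : Submodule O V | Integ Q M} (by
    intro c hc hch y hy
    refine ⟨sSup c, fun x hx => ?_, fun z hz => le_sSup hz⟩
    obtain ⟨N, hN, hxN⟩ := (Submodule.mem_sSup_of_directed ⟨y, hy⟩ hch.directedOn).1 hx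
    exact hc hN x hxN) L h
  refine ⟨M, ⟨hM.1, fun x => ?_, fun L' h1 h2 => hM.2 h2 h1⟩, hLM⟩
  obtain ⟨c, hc, h0, hx⟩ := hf x
  exact ⟨c, hc, h0, hLM hx⟩

/-- Data of a henselian discrete valuation. -/
structure LocData (O : Subring K) where
  val : Valuation K (WithZero (Multiplicative ℤ))
  mem : ∀ x, x ∈ O ↔ val x ≤ 1
  p : K
  hp : val p = WithZero.exp (-1 : ℤ)
  hens : ∀ a c, val a < 1 → val c < 1 → ∃ t ∈ O, a * t ^ 2 + t + c = 0

lemma aniso_polar (D : LocData O) (Q : QuadraticForm K V) (hQ : ∀ x, Q x = 0 → x = 0) (x y : V)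
    (hx : Q x ∈ O) (hy : Q y ∈ O) : QuadraticMap.polar Q x y ∈ O := by
  by_contra hb
  set b := QuadraticMap.polar Q x y with hbdef
  have hb1 : 1 < D.val b := by rw [D.mem] at hb; exact not_le.1 hb
  have hb0 : b ≠ 0 := by rintro h; rw [h] at hb; exact hb O.zero_mem
  have hv0 : D.val b ≠ 0 := (Valuation.ne_zero_iff _).2 hb0
  have hlt : ∀ a, a ∈ O → D.val (a / b) < 1 := by
    intro a ha
    rw [map_div₀, div_lt_one₀ (zero_lt_iff.2 hv0)]
    exact lt_of_le_of_lt ((D.mem a).1 ha) hb1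
  obtain ⟨t, ht, h⟩ := D.hens _ _ (hlt _ hx) (hlt _ hy)
  have h0 : Q (t • x + y) = 0 := by
    rw [QuadraticMap.map_add Q, QuadraticMap.map_smul, QuadraticMap.polar_smul_left, ← hbdef]
    field_simp at h
    simp only [smul_eq_mul]
    linear_combination h
  have hy' : y = -(t • x) := by
    have := hQ _ h0
    exact (neg_eq_of_add_eq_zero_right this).symm
  apply hb
  rw [hbdef, hy', QuadraticMap.polar_neg_right, QuadraticMap.polar_smul_right,
    QuadraticMap.polar_self]
  refine O.neg_mem (O.mul_mem ht ?_)
  rw [nsmul_eq_mul]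
  exact O.mul_mem (by simp) hx

lemma aniso_mem (D : LocData O) (Q : QuadraticForm K V) (hQ : ∀ x, Q x = 0 → x = 0)
    {L : Submodule O V} (hL : Max Q L) (x : V) : x ∈ L ↔ Q x ∈ O := by
  refine ⟨hL.1 x, fun hx => ?_⟩
  let A : Submodule O V :=
    { carrier := {x | Q x ∈ O}
      add_mem' := fun {a b} ha hb => by
        show Q (a + b) ∈ O
        rw [QuadraticMap.map_add Q]
        exact O.add_mem (O.add_mem ha hb) (aniso_polar D Q hQ a b ha hb)
      zero_mem' := by simp [O.zero_mem]
      smul_mem' := fun c a ha => by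
        show Q ((c : K) • a) ∈ O
        rw [QuadraticMap.map_smul]
        exact O.mul_mem (O.mul_mem c.2 c.2) ha }
  exact hL.2.2 A (fun y hy => hL.1 y hy) (fun y hy => hy) hx

lemma exists_hyp (D : LocData O) (Q : QuadraticForm K V) (hQ : QLat.Nondeg Q)
    {L : Submodule O V} (hL : Max Q L) (e : V) (he : e ≠ 0) (hQe : Q e = 0) :
    ∃ e ∈ L, ∃ f ∈ L, Q e = 0 ∧ Q f = 0 ∧ QuadraticMap.polar Q e f = 1 := by
  obtain ⟨y, hy⟩ : ∃ y, QuadraticMap.polar Q e y ≠ 0 := by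
    by_contra h; push Not at h; exact he (hQ e h)
  obtain ⟨c, hc, hc0, hcy⟩ := hL.2.1 y
  have hq0 : QuadraticMap.polar Q e (c • y) ≠ 0 := by
    rw [QuadraticMap.polar_smul_right]; exact mul_ne_zero hc0 hy
  set q := QuadraticMap.polar Q e (c • y) with hq
  have hp0 : D.p ≠ 0 := by
    intro h; have := D.hp; rw [h, map_zero] at this; exact WithZero.exp_ne_zero this.symm
  have hvp : ∀ k : ℤ, D.val (D.p ^ k) = WithZero.exp (-k) := by
    intro k
    rw [map_zpow₀, D.hp, ← WithZero.exp_zsmul]; simp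
  obtain ⟨k, hk, hmin⟩ := Int.exists_least_of_bdd (P := fun k : ℤ => D.p ^ k • e ∈ L) (by
      refine ⟨WithZero.log (D.val q), fun z hz => ?_⟩
      have h1 : D.p ^ z * q ∈ O := by
        have := polar_mem hL.1 hz hcy
        rwa [QuadraticMap.polar_smul_left, smul_eq_mul] at this
      rw [D.mem, map_mul, hvp] at h1
      rw [WithZero.log_le_iff_le_exp ((Valuation.ne_zero_iff _).2 hq0)]
      rw [WithZero.exp_neg] at h1
      rwa [inv_mul_le_one₀ (by simp)] at h1) (by
      obtain ⟨a, ha, ha0, hae⟩ := hL.2.1 e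
      refine ⟨-WithZero.log (D.val a), ?_⟩
      have : D.p ^ (-WithZero.log (D.val a)) • e
          = (D.p ^ (-WithZero.log (D.val a)) / a) • a • e := by
        rw [smul_smul, div_mul_cancel₀ _ ha0]
      show _ ∈ L
      rw [this]
      refine smem L ?_ hae
      have hva : D.val a ≠ 0 := (Valuation.ne_zero_iff _).2 ha0
      rw [D.mem, map_div₀, hvp, neg_neg, WithZero.exp_log hva, div_self hva])
  set e' := D.p ^ k • e with he'
  have hQe' : Q e' = 0 := by rw [he', QuadraticMap.map_smul, hQe]; simp
  have hunit : ∃ y ∈ L, D.val (QuadraticMap.polar Q e' y) = 1 := by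
    by_contra hcon
    push Not at hcon
    have hlt : ∀ y ∈ L, D.p⁻¹ * QuadraticMap.polar Q e' y ∈ O := by
      intro y hy
      have h1 : D.val (QuadraticMap.polar Q e' y) < 1 :=
        lt_of_le_of_ne ((D.mem _).1 (polar_mem hL.1 hk hy)) (hcon y hy)
      rw [D.mem, map_mul, map_inv₀, D.hp, inv_mul_le_one₀ (by simp)]
      by_cases h0 : D.val (QuadraticMap.polar Q e' y) = 0
      · rw [h0]; exact zero_le
      · rw [← WithZero.exp_zero, ← WithZero.log_lt_iff_lt_exp h0] at h1
        rw [← WithZero.log_le_iff_le_exp h0]; omega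
    have hle := hL.2.2 (L ⊔ Submodule.span O {D.p⁻¹ • e'}) le_sup_left (by
      intro z hz
      obtain ⟨x, hx, w, hw, rfl⟩ := Submodule.mem_sup.1 hz
      obtain ⟨a, rfl⟩ := Submodule.mem_span_singleton.1 hw
      have ha : a • D.p⁻¹ • e' = ((a : K) * D.p⁻¹) • e' := by rw [mul_smul]; rfl
      rw [ha, QuadraticMap.map_add Q, QuadraticMap.map_smul, hQe', QuadraticMap.polar_comm,
        QuadraticMap.polar_smul_left]
      simp only [smul_eq_mul, mul_zero, add_zero]
      refine O.add_mem (hL.1 x hx) ?_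
      rw [mul_assoc]
      exact O.mul_mem a.2 (hlt x hx))
    have hin : D.p⁻¹ • e' ∈ L :=
      hle (Submodule.mem_sup_right (Submodule.mem_span_singleton_self _))
    have := hmin (k - 1) (by
      show _ ∈ L
      rwa [he', smul_smul, ← zpow_neg_one, ← zpow_add₀ hp0, neg_add_eq_sub] at hin)
    omega
  obtain ⟨y, hyL, hyu⟩ := hunit
  set u := QuadraticMap.polar Q e' y with hu
  have hu0 : u ≠ 0 := by intro h; rw [h, map_zero] at hyu; exact zero_ne_one hyu
  have hf0 : u⁻¹ • y ∈ L := smem L (by rw [D.mem, map_inv₀, hyu, inv_one]) hyL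
  set f0 := u⁻¹ • y with hf0d
  have hpf0 : QuadraticMap.polar Q e' f0 = 1 := by
    rw [hf0d, QuadraticMap.polar_smul_right, ← hu, smul_eq_mul, inv_mul_cancel₀ hu0]
  clear_value f0
  clear_value e'
  refine ⟨e', hk, f0 + (-Q f0) • e',
    L.add_mem hf0 (smem L (O.neg_mem (hL.1 _ hf0)) hk), hQe', ?_, ?_⟩
  · rw [QuadraticMap.map_add Q, QuadraticMap.map_smul, QuadraticMap.polar_smul_right,
      QuadraticMap.polar_comm, hpf0, hQe']
    simp
  · rw [QuadraticMap.polar_add_right, QuadraticMap.polar_smul_right, QuadraticMap.polar_self,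
      hpf0, hQe']
    simp

end Lat

end QPf

namespace QPf

section LocUnique

variable {K : Type} [Field K] {O : Subring K}

lemma max_transport {V : Type} [AddCommGroup V] [Module K V] {Q : QuadraticForm K V}
    {L : Submodule O V} (hL : Max Q L) (g : V ≃ₗ[K] V) (hg : ∀ x, Q (g x) = Q x) :
    ∃ L1 : Submodule O V, Max Q L1 ∧ ∀ x, g x ∈ L1 ↔ x ∈ L := by
  have hg' : ∀ x, Q (g.symm x) = Q x := fun x => by rw [← hg]; simp
  refine ⟨L.comap (g.symm.toLinearMap.restrictScalars O), ⟨?_, ?_, ?_⟩, fun x => by simp⟩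
  · intro x hx
    rw [← hg' x]; exact hL.1 _ hx
  · intro x
    obtain ⟨c, hc, h0, hx⟩ := hL.2.1 (g.symm x)
    refine ⟨c, hc, h0, ?_⟩
    show g.symm (c • x) ∈ L
    rwa [map_smul]
  · intro L' hle hint x hx
    have h1 := hL.2.2 (L'.comap (g.toLinearMap.restrictScalars O)) (by
      intro y hy
      apply hle
      show g.symm (g y) ∈ L
      simpa using hy) (by
      intro y hy
      rw [← hg y]; exact hint _ hy)
    apply h1
    show g (g.symm x) ∈ L'
    simpa using hx

/-- Reduction step: both lattices contain the same hyperbolic plane. -/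
lemma unique_step (n : ℕ)
    (ih : ∀ m < n, ∀ (V : Type) [AddCommGroup V] [Module K V] [FiniteDimensional K V],
      Module.finrank K V = m → ∀ (Q : QuadraticForm K V), QLat.Nondeg Q →
      ∀ (L M : Submodule O V), Max Q L → Max Q M →
      ∃ ρ : V →ₗ[K] V, (∀ x, Q (ρ x) = Q x) ∧ ∀ x ∈ L, ρ x ∈ M)
    (V : Type) [AddCommGroup V] [Module K V] [FiniteDimensional K V]
    (hn : Module.finrank K V = n) (Q : QuadraticForm K V) (hQ : QLat.Nondeg Q)
    (L M : Submodule O V) (hL : Max Q L) (hM : Max Q M) (e f : V)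
    (heL : e ∈ L) (hfL : f ∈ L) (heM : e ∈ M) (hfM : f ∈ M)
    (he : Q e = 0) (hf : Q f = 0) (hef : QuadraticMap.polar Q e f = 1) :
    ∃ ρ : V →ₗ[K] V, (∀ x, Q (ρ x) = Q x) ∧ ∀ x ∈ L, ρ x ∈ M := by
  have hfe : QuadraticMap.polar Q f e = 1 := by rw [QuadraticMap.polar_comm, hef]
  have hee : QuadraticMap.polar Q e e = 0 := by rw [QuadraticMap.polar_self, he, smul_zero]
  have hff : QuadraticMap.polar Q f f = 0 := by rw [QuadraticMap.polar_self, hf, smul_zero]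
  let V0 : Submodule K V := LinearMap.ker (Q.polarBilin e) ⊓ LinearMap.ker (Q.polarBilin f)
  have hV0 : ∀ x, x ∈ V0 ↔ QuadraticMap.polar Q e x = 0 ∧ QuadraticMap.polar Q f x = 0 := by
    intro x; simp [V0]
  let pr' : V →ₗ[K] V := LinearMap.id - (Q.polarBilin f).smulRight e - (Q.polarBilin e).smulRight f
  have hpr'v : ∀ x, pr' x = x - QuadraticMap.polar Q f x • e - QuadraticMap.polar Q e x • f := by
    intro x; simp [pr']
  let pr : V →ₗ[K] V0 := pr'.codRestrict V0 (by
    intro x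
    rw [hV0, hpr'v]
    simp [QuadraticMap.polar_sub_right, QuadraticMap.polar_smul_right, hfe, hef, hee, hff])
  have hprv : ∀ x, (pr x : V) = x - QuadraticMap.polar Q f x • e - QuadraticMap.polar Q e x • f :=
    fun x => hpr'v x
  have hdec : ∀ x, x = QuadraticMap.polar Q f x • e + QuadraticMap.polar Q e x • f + pr x := by
    intro x; rw [hprv]; abel
  have hQdec : ∀ (a b : K) (y : V0), Q (a • e + b • f + y) = a * b + Q y := by
    intro a b y
    obtain ⟨h1, h2⟩ := (hV0 _).1 y.2
    rw [QuadraticMap.map_add Q, QuadraticMap.map_add Q (a • e), QuadraticMap.map_smul,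
      QuadraticMap.map_smul, QuadraticMap.polar_add_left]
    simp only [QuadraticMap.polar_smul_left, QuadraticMap.polar_smul_right, he, hf, hef, h1, h2,
      smul_eq_mul]
    ring
  have hpr0 : ∀ y : V0, pr y = y := by
    intro y
    obtain ⟨h1, h2⟩ := (hV0 _).1 y.2
    ext; rw [hprv, h1, h2]; simp
  let Q0 : QuadraticForm K V0 := Q.comp V0.subtype
  have hQ0 : ∀ y : V0, Q0 y = Q y := fun y => rfl
  have hnd : QLat.Nondeg Q0 := by
    intro x hx
    obtain ⟨h1, h2⟩ := (hV0 _).1 x.2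
    have : (x : V) = 0 := by
      refine hQ _ fun y => ?_
      rw [hdec y, QuadraticMap.polar_add_right, QuadraticMap.polar_add_right,
        QuadraticMap.polar_smul_right, QuadraticMap.polar_smul_right,
        QuadraticMap.polar_comm Q _ e, QuadraticMap.polar_comm Q _ f, h1, h2]
      have := hx (pr y)
      simp only [smul_zero, zero_add]
      exact this
    exact Subtype.ext this
  have hlt : Module.finrank K V0 < n := by
    rw [← hn]
    apply Submodule.finrank_lt
    intro h
    have : e ∈ V0 := by rw [h]; trivial
    have := ((hV0 e).1 this).2
    rw [hfe] at this
    exact one_ne_zero this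
  let res : Submodule O V → Submodule O V0 := fun P =>
    { carrier := {x | (x : V) ∈ P}
      add_mem' := fun {a b} ha hb => P.add_mem ha hb
      zero_mem' := P.zero_mem
      smul_mem' := fun c a ha => P.smul_mem c ha }
  have hresmax : ∀ P : Submodule O V, Max Q P → e ∈ P → f ∈ P → Max Q0 (res P) := by
    intro P hP heP hfP
    refine ⟨fun x hx => hP.1 _ hx, fun x => ?_, fun L0' hle hint y hy => ?_⟩
    · obtain ⟨c, hc, h0, hx⟩ := hP.2.1 x
      exact ⟨c, hc, h0, hx⟩
    · let L' : Submodule O V :=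
        { carrier := {x | QuadraticMap.polar Q e x ∈ O ∧ QuadraticMap.polar Q f x ∈ O ∧ pr x ∈ L0'}
          add_mem' := fun {a b} ha hb => by
            refine ⟨?_, ?_, ?_⟩
            · rw [QuadraticMap.polar_add_right]; exact O.add_mem ha.1 hb.1
            · rw [QuadraticMap.polar_add_right]; exact O.add_mem ha.2.1 hb.2.1
            · rw [map_add]; exact L0'.add_mem ha.2.2 hb.2.2
          zero_mem' := by
            refine ⟨?_, ?_, ?_⟩
            · rw [QuadraticMap.polar_zero_right]; exact O.zero_mem
            · rw [QuadraticMap.polar_zero_right]; exact O.zero_mem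
            · rw [map_zero]; exact L0'.zero_mem
          smul_mem' := fun c a ha => by
            have hc : c • a = (c : K) • a := rfl
            refine ⟨?_, ?_, ?_⟩
            · rw [hc, QuadraticMap.polar_smul_right]; exact O.mul_mem c.2 ha.1
            · rw [hc, QuadraticMap.polar_smul_right]; exact O.mul_mem c.2 ha.2.1
            · rw [hc, map_smul]; exact smem L0' c.2 ha.2.2 }
      have hL' := hP.2.2 L' (by
        intro x hx
        refine ⟨polar_mem hP.1 heP hx, polar_mem hP.1 hfP hx, hle ?_⟩
        show (pr x : V) ∈ P
        rw [hprv]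
        exact P.sub_mem (P.sub_mem hx (smem P (polar_mem hP.1 hfP hx) heP))
          (smem P (polar_mem hP.1 heP hx) hfP)) (by
        intro x hx
        rw [hdec x, hQdec]
        exact O.add_mem (O.mul_mem hx.2.1 hx.1) (hint _ hx.2.2))
      show (y : V) ∈ P
      apply hL'
      obtain ⟨h1, h2⟩ := (hV0 _).1 y.2
      refine ⟨?_, ?_, ?_⟩
      · rw [h1]; exact O.zero_mem
      · rw [h2]; exact O.zero_mem
      · rw [hpr0]; exact hy
  obtain ⟨ρ0, hρ0, hρ0m⟩ := ih _ hlt V0 rfl Q0 hnd (res L) (res M)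
    (hresmax L hL heL hfL) (hresmax M hM heM hfM)
  let ρ : V →ₗ[K] V := (Q.polarBilin f).smulRight e + (Q.polarBilin e).smulRight f
    + V0.subtype ∘ₗ ρ0 ∘ₗ pr
  have hρ : ∀ x, ρ x = QuadraticMap.polar Q f x • e + QuadraticMap.polar Q e x • f
      + (ρ0 (pr x) : V) := by
    intro x; simp [ρ]
  refine ⟨ρ, fun x => ?_, fun x hx => ?_⟩
  · rw [hρ, hQdec, ← hQ0, hρ0, hQ0, ← hQdec, ← hdec]
  · rw [hρ]
    refine M.add_mem (M.add_mem (smem M (polar_mem hL.1 hfL hx) heM)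
      (smem M (polar_mem hL.1 heL hx) hfM)) ?_
    have : pr x ∈ res L := by
      show (pr x : V) ∈ L
      rw [hprv]
      exact L.sub_mem (L.sub_mem hx (smem L (polar_mem hL.1 hfL hx) heL))
        (smem L (polar_mem hL.1 heL hx) hfL)
    exact hρ0m _ this

lemma max_unique (D : LocData O) (h2 : (2 : K) ≠ 0) : ∀ (n : ℕ)
    (V : Type) [AddCommGroup V] [Module K V] [FiniteDimensional K V],
      Module.finrank K V = n → ∀ (Q : QuadraticForm K V), QLat.Nondeg Q →
      ∀ (L M : Submodule O V), Max Q L → Max Q M →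
      ∃ ρ : V →ₗ[K] V, (∀ x, Q (ρ x) = Q x) ∧ ∀ x ∈ L, ρ x ∈ M := by
  intro n
  induction n using Nat.strong_induction_on with
  | _ n ih =>
    intro V _ _ _ hn Q hQ L M hL hM
    by_cases hiso : ∀ x, Q x = 0 → x = 0
    · refine ⟨LinearMap.id, fun x => rfl, fun x hx => ?_⟩
      rw [LinearMap.id_apply, aniso_mem D Q hiso hM]
      exact hL.1 x hx
    · push Not at hiso
      obtain ⟨x, hx0, hx⟩ := hiso
      obtain ⟨e, heL, f, hfL, he, hf, hef⟩ := exists_hyp D Q hQ hL x hx hx0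
      obtain ⟨e', heM, f', hfM, he', hf', hef'⟩ := exists_hyp D Q hQ hM x hx hx0
      have hor : ∀ e f : V, Q e = 0 → Q f = 0 → QuadraticMap.polar Q e f = 1 →
          Q (e + f) = 1 ∧ Q (e - f) = -1 ∧ QuadraticMap.polar Q (e + f) (e - f) = 0 := by
        intro e f he hf hef
        refine ⟨?_, ?_, ?_⟩
        · rw [QuadraticMap.map_add Q, he, hf, hef]; ring
        · rw [sub_eq_add_neg, QuadraticMap.map_add Q, QuadraticMap.map_neg,
            QuadraticMap.polar_neg_right, he, hf, hef]; ring
        · rw [QuadraticMap.polar_add_left, QuadraticMap.polar_sub_right,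
            QuadraticMap.polar_sub_right, QuadraticMap.polar_self, QuadraticMap.polar_self,
            QuadraticMap.polar_comm Q f e, he, hf, hef]
          simp
      obtain ⟨a1, a2, a3⟩ := hor e f he hf hef
      obtain ⟨b1, b2, b3⟩ := hor e' f' he' hf' hef'
      obtain ⟨g, hg, hgx⟩ := witt_fin h2 Q 2 ![e + f, e - f] ![e' + f', e' - f']
        (by
          intro i j hij
          fin_cases i <;> fin_cases j <;> simp_all [QuadraticMap.polar_comm Q (e - f)])
        (by
          intro i j hij
          fin_cases i <;> fin_cases j <;> simp_all [QuadraticMap.polar_comm Q (e' - f')])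
        (by intro i; fin_cases i <;> simp [a1, a2, b1, b2])
        (by intro i; fin_cases i <;> simp [b1, b2])
      have g1 : g e + g f = e' + f' := by simpa using hgx 0
      have g2 : g e - g f = e' - f' := by simpa using hgx 1
      have ge : g e = e' := by
        have : (2 : K) • g e = (2 : K) • e' := by
          rw [two_smul, two_smul]
          calc g e + g e = (g e + g f) + (g e - g f) := by abel
            _ = e' + e' := by rw [g1, g2]; abel
        exact smul_right_injective V h2 this
      have gf : g f = f' := by rw [ge] at g1; exact add_left_cancel g1
      obtain ⟨L1, hL1, hL1m⟩ := max_transport hL g hg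
      obtain ⟨ρ, hρ, hρm⟩ := unique_step n ih V hn Q hQ L1 M hL1 hM e' f'
        (by rw [← ge, hL1m]; exact heL) (by rw [← gf, hL1m]; exact hfL) heM hfM he' hf' hef'
      refine ⟨ρ ∘ₗ g.toLinearMap, fun x => ?_, fun x hx => ?_⟩
      · simp [hρ, hg]
      · exact hρm _ ((hL1m x).2 hx)

lemma inj_of_isom {V W : Type} [AddCommGroup V] [Module K V] [AddCommGroup W] [Module K W]
    {Q' : QuadraticForm K W} (hQ' : QLat.Nondeg Q') {Q : QuadraticForm K V} (σ : W →ₗ[K] V)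
    (hσ : ∀ x, Q (σ x) = Q' x) : Function.Injective σ := by
  rw [injective_iff_map_eq_zero]
  intro x hx
  refine hQ' x fun y => ?_
  have : QuadraticMap.polar Q (σ x) (σ y) = QuadraticMap.polar Q' x y := by
    simp [QuadraticMap.polar, ← map_add, hσ]
  rw [← this, hx, QuadraticMap.polar_zero_left]

/-- A maximal lattice represents every integral lattice whose space it represents. -/
lemma max_adc (D : LocData O) (h2 : (2 : K) ≠ 0)
    {V : Type} [AddCommGroup V] [Module K V] [FiniteDimensional K V]
    (Q : QuadraticForm K V) (hQ : QLat.Nondeg Q) (L : Submodule O V) (hL : Max Q L)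
    {W : Type} [AddCommGroup W] [Module K W] (Q' : QuadraticForm K W) (N : Submodule O W)
    (hN : N.FG) (hNi : Integ Q' N) (σ : W →ₗ[K] V) (hσ : ∀ x, Q (σ x) = Q' x) :
    ∃ ρ : W →ₗ[K] V, (∀ x, Q (ρ x) = Q' x) ∧ ∀ x ∈ N, ρ x ∈ L := by
  obtain ⟨c, hc, hc0, hcN⟩ := absorb (hN.map (σ.restrictScalars O)) hL.2.1
  let P : Submodule O V := N.map (σ.restrictScalars O) ⊔ L.map (LinearMap.lsmul O V ⟨c, hc⟩)
  obtain ⟨M, hM, hPM⟩ := exists_max (Q := Q) (L := P) (by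
      intro z hz
      obtain ⟨x, hx, y, hy, rfl⟩ := Submodule.mem_sup.1 hz
      obtain ⟨l, hl, rfl⟩ := hy
      have hx' := hcN x hx
      have e1 : (LinearMap.lsmul O V ⟨c, hc⟩) l = c • l := rfl
      rw [e1, QuadraticMap.map_add Q, QuadraticMap.map_smul, QuadraticMap.polar_smul_right,
        ← QuadraticMap.polar_smul_left]
      refine O.add_mem (O.add_mem ?_ (O.mul_mem (O.mul_mem hc hc) (hL.1 l hl)))
        (polar_mem hL.1 hx' hl)
      obtain ⟨n, hn, rfl⟩ := hx
      show Q (σ n) ∈ O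
      rw [hσ]; exact hNi n hn) (by
      intro x
      obtain ⟨d, hd, hd0, hdx⟩ := hL.2.1 x
      refine ⟨c * d, O.mul_mem hc hd, mul_ne_zero hc0 hd0, ?_⟩
      rw [mul_smul]
      exact Submodule.mem_sup_right ⟨_, hdx, rfl⟩)
  obtain ⟨ρ, hρ, hρm⟩ := max_unique D h2 _ V rfl Q hQ M L hM hL
  refine ⟨ρ ∘ₗ σ, fun x => by simp [hρ, hσ], fun x hx => hρm _ (hPM ?_)⟩
  exact Submodule.mem_sup_left ⟨x, hx, rfl⟩

end LocUnique

end QPf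

namespace QPf
variable (F : Type) [Field F] [NumberField F]
  (v : HeightOneSpectrum (NumberField.RingOfIntegers F))

theorem memOv (x : Fv F v) : x ∈ Ov F v ↔ Valued.v x ≤ 1 := 
  HeightOneSpectrum.mem_adicCompletionIntegers _ _ _

theorem valF (x : F) : Valued.v (algebraMap F (Fv F v) x) = v.valuation F x := 
  HeightOneSpectrum.valuedAdicCompletion_eq_valuation' v x

theorem exists_ball (s : Set (Fv F v)) (hs : s ∈ nhds (0 : Fv F v)) :
    ∃ n : ℕ, ∀ x : Fv F v, Valued.v x ≤ WithZero.exp (-(n:ℤ)) → x ∈ s := by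
  obtain ⟨γ, hγ⟩ := Valued.mem_nhds_zero.1 hs
  have h0 : MonoidWithZeroHom.ValueGroup₀.embedding γ.val ≠ (0 : WithZero (Multiplicative ℤ)) := by
    simp
  obtain ⟨m, hm⟩ : ∃ m : ℤ, MonoidWithZeroHom.ValueGroup₀.embedding γ.val = WithZero.exp m := 
    ⟨_, (WithZero.exp_log h0).symm⟩
  refine ⟨(1 - m).toNat, fun x hx => hγ ?_⟩
  rw [Set.mem_ofPred_eq, Valuation.restrict_lt_iff_lt_embedding, hm]
  refine lt_of_le_of_lt hx ?_
  rw [WithZero.exp_lt_exp]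
  omega

theorem hens (a c : Fv F v) (ha : Valued.v a < 1) (hc : Valued.v c < 1) :
    ∃ t ∈ Ov F v, a * t^2 + t + c = 0 := by
  obtain ⟨t, ht0, ht⟩ : ∃ t : ℕ → Fv F v, t 0 = 0 ∧ ∀ n, t (n+1) = -(c + a * (t n)^2) :=
    ⟨fun n => Nat.rec 0 (fun _ x => -(c + a * x^2)) n, rfl, fun _ => rfl⟩
  have h1 : ∀ n, Valued.v (t n) ≤ 1 := by
    intro n
    induction n with
    | zero => simp [ht0]
    | succ n ih =>
      rw [ht, Valuation.map_neg]
      refine (Valuation.map_add _ _ _).trans (max_le hc.le ?_)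
      rw [map_mul, map_pow]
      exact mul_le_one' ha.le (pow_le_one' ih 2)
  have ha' : Valued.v a ≤ WithZero.exp (-1 : ℤ) := by
    by_cases h : Valued.v a = 0
    · rw [h]; exact zero_le
    · rw [← WithZero.exp_log h, WithZero.exp_le_exp]
      rw [← WithZero.exp_log h, ← WithZero.exp_zero, WithZero.exp_lt_exp] at ha
      omega
  have h2 : ∀ n, Valued.v (t (n+1) - t n) ≤ WithZero.exp (-(n:ℤ)) := by
    intro n
    induction n with
    | zero =>
      simpa using (Valuation.map_sub _ _ _).trans (max_le (h1 1) (h1 0))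
    | succ n ih =>
      have e : t (n+1+1) - t (n+1) = a * ((t (n+1) - t n) * (-(t (n+1) + t n))) := by
        rw [ht (n+1)]
        linear_combination -ht n
      rw [e, map_mul, map_mul, Valuation.map_neg]
      have : Valued.v (t (n+1) + t n) ≤ 1 := (Valuation.map_add _ _ _).trans (max_le (h1 (n+1)) (h1 n))
      calc _ ≤ WithZero.exp (-1 : ℤ) * (WithZero.exp (-(n:ℤ)) * 1) := mul_le_mul' ha' (mul_le_mul' ih this)
        _ = _ := by rw [mul_one, ← WithZero.exp_add]; congr 1; push_cast; ring
  have hcs : CauchySeq t := by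
    apply NonarchimedeanAddGroup.cauchySeq_of_tendsto_sub_nhds_zero
    rw [Filter.tendsto_def]
    intro s hs
    obtain ⟨n, hn⟩ := exists_ball F v s hs
    filter_upwards [Filter.eventually_ge_atTop n] with m hm
    apply hn
    refine (h2 m).trans ?_
    rw [WithZero.exp_le_exp]
    omega
  obtain ⟨x, hx⟩ := cauchySeq_tendsto_of_complete hcs
  refine ⟨x, ?_, ?_⟩
  · rw [memOv]
    exact (Valued.isClosed_integer (Fv F v)).mem_of_tendsto hx (Filter.Eventually.of_forall h1)
  · have h3 : Filter.Tendsto (fun n => t (n+1)) Filter.atTop (nhds x) :=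
      (Filter.tendsto_add_atTop_iff_nat 1).2 hx
    have h4 : Filter.Tendsto (fun n => t (n+1)) Filter.atTop (nhds (-(c + a * x^2))) := by
      simp only [ht]
      exact ((hx.pow 2).const_mul a |>.const_add c).neg
    have := tendsto_nhds_unique h3 h4
    linear_combination this

def locData : LocData (Ov F v) where
  val := Valued.v
  mem := memOv F v
  p := algebraMap F (Fv F v) (v.valuation_exists_uniformizer F).choose
  hp := by
    rw [valF]; exact (v.valuation_exists_uniformizer F).choose_spec
  hens := hens F v

theorem two_ne : (2 : Fv F v) ≠ 0 := by
  have := (map_ne_zero (algebraMap F (Fv F v))).2 (two_ne_zero (α := F))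
  rwa [map_ofNat] at this

/-- global integrality is local -/
theorem memOF (x : F) : x ∈ OF F ↔ ∀ w : HeightOneSpectrum (NumberField.RingOfIntegers F), w.valuation F x ≤ 1 := by
  constructor
  · intro h w
    exact w.valuation_le_one (K := F) ⟨x, h⟩
  · intro h
    obtain ⟨y, rfl⟩ := HeightOneSpectrum.mem_integers_of_valuation_le_one F x h
    exact y.2

theorem memOF_Ov (x : F) (h : x ∈ OF F) : algebraMap F (Fv F v) x ∈ Ov F v := by
  rw [memOv, valF]; exact (memOF F x).1 h v

end QPf

namespace QPf
variable (F : Type) [Field F] [NumberField F]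
  (v : HeightOneSpectrum (NumberField.RingOfIntegers F))

theorem val_le_aux (w : HeightOneSpectrum (NumberField.RingOfIntegers F))
    (t q s m : NumberField.RingOfIntegers F) (h : t * q = s * m) (hq : q ∉ w.asIdeal) :
    w.valuation F (algebraMap _ F t) ≤ w.valuation F (algebraMap _ F s) := by
  have h1 : w.valuation F (algebraMap _ F q) = 1 := (w.valuation_eq_one_iff_notMem).2 hq
  have h2 := congrArg (fun z => w.valuation F (algebraMap _ F z)) h
  simp only [map_mul, h1, mul_one] at h2
  rw [h2]
  exact mul_le_of_le_one_right' (w.valuation_le_one (K := F) m)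

theorem dense_int (a : Fv F v) : ∃ b : F, algebraMap F (Fv F v) b - a ∈ Ov F v := by
  have hd := HeightOneSpectrum.denseRange_algebraMap (K := F) v
  have ho : IsOpen {x : Fv F v | x - a ∈ Ov F v} := 
    (Valued.isOpen_integer (Fv F v)).preimage (continuous_sub_right a)
  obtain ⟨b, hb⟩ := hd.exists_mem_open ho ⟨a, by
    change a - a ∈ Ov F v
    rw [sub_self]; exact zero_mem _⟩
  exact ⟨b, hb⟩

theorem sapprox (a : Fv F v) : ∃ b : F, algebraMap F (Fv F v) b - a ∈ Ov F v ∧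
    ∀ w : HeightOneSpectrum (NumberField.RingOfIntegers F), w ≠ v → w.valuation F b ≤ 1 := by
  obtain ⟨b0, hb0⟩ := dense_int F v a
  obtain ⟨r, s, hs, rfl⟩ := IsFractionRing.div_surjective (A := NumberField.RingOfIntegers F) b0
  have hs0 : s ≠ 0 := nonZeroDivisors.ne_zero hs
  have hI : Ideal.span {s} ≠ 0 := by simpa using hs0
  have hfin : FiniteMultiplicity v.asIdeal (Ideal.span {s}) :=
    FiniteMultiplicity.of_prime_left v.prime hI
  obtain ⟨J, hJ, hvJ⟩ := hfin.exists_eq_pow_mul_and_not_dvd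
  set k := multiplicity v.asIdeal (Ideal.span {s})
  have hvJ' : ¬ J ≤ v.asIdeal := by rwa [← Ideal.dvd_iff_le]
  have hcop : IsCoprime J v.asIdeal := by
    rw [Ideal.isCoprime_iff_sup_eq, sup_comm]
    exact v.isMaximal.out.2 _ (lt_of_le_of_ne le_sup_left (fun h => hvJ' (by rw [h]; exact le_sup_right)))
  obtain ⟨t, ht, u, hu, htu⟩ := Ideal.isCoprime_iff_exists.1 (hcop.pow_right (n := k))
  have key : ∀ x ∈ v.asIdeal ^ k, ∀ y ∈ J, ∃ m, x * y = s * m := by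
    intro x hx y hy
    have : x * y ∈ Ideal.span {s} := by rw [hJ]; exact Ideal.mul_mem_mul hx hy
    obtain ⟨m, hm⟩ := Ideal.mem_span_singleton'.1 this
    exact ⟨m, by rw [← hm, mul_comm]⟩
  have hsF : algebraMap (NumberField.RingOfIntegers F) F s ≠ 0 := by simpa using hs0
  have fin : ∀ (w : HeightOneSpectrum (NumberField.RingOfIntegers F)) (z : NumberField.RingOfIntegers F),
      w.valuation F (algebraMap _ F z) ≤ w.valuation F (algebraMap _ F s) → 
      w.valuation F (algebraMap _ F r / algebraMap _ F s * algebraMap _ F z) ≤ 1 := by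
    intro w z hz
    rw [map_mul, map_div₀, div_mul_eq_mul_div, mul_div_assoc]
    have h1 := w.valuation_le_one (K := F) r
    refine mul_le_one' h1 ?_
    exact div_le_one_of_le₀ hz zero_le
  refine ⟨algebraMap _ F r / algebraMap _ F s * algebraMap _ F t, ?_, ?_⟩
  · obtain ⟨j, hj, hjv⟩ := Set.not_subset.1 hvJ'
    obtain ⟨m, hm⟩ := key u hu j hj
    have h1 := fin v u (val_le_aux F v u j s m hm hjv)
    have e : algebraMap F (Fv F v) (algebraMap _ F r / algebraMap _ F s * algebraMap _ F t) - a =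
      (algebraMap F (Fv F v) (algebraMap _ F r / algebraMap _ F s) - a) - 
        algebraMap F (Fv F v) (algebraMap _ F r / algebraMap _ F s * algebraMap _ F u) := by
      have : algebraMap _ F t = 1 - algebraMap _ F u := by
        rw [eq_sub_iff_add_eq, ← map_add, htu, map_one]
      rw [this, map_mul, map_mul, map_sub, map_one]
      ring
    rw [e]
    refine sub_mem hb0 ?_
    rw [memOv, valF]
    exact h1
  · intro w hw
    have : ¬ v.asIdeal ≤ w.asIdeal := by
      intro h
      exact hw (HeightOneSpectrum.ext (v.isMaximal.eq_of_le w.isPrime.ne_top h).symm)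
    obtain ⟨q, hq, hqw⟩ := Set.not_subset.1 this
    obtain ⟨m, hm⟩ := key (q^k) (Ideal.pow_mem_pow hq k) t ht
    refine fin w t (val_le_aux F w t (q^k) s m (by rw [← hm, mul_comm]) ?_)
    intro h
    exact hqw (w.isPrime.mem_of_pow_mem _ h)

theorem loc_den (x : F) (hx : v.valuation F x ≤ 1) :
    ∃ s ∈ OF F, v.valuation F s = 1 ∧ s * x ∈ OF F := by
  obtain ⟨n, d, h⟩ := v.exists_primeCompl_mul_eq_of_integer x hx
  refine ⟨algebraMap _ F d.1, d.1.2, (v.valuation_eq_one_iff_notMem).2 d.2, ?_⟩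
  rw [mul_comm, h]
  exact n.2

theorem exists_glob (c : Fv F v) (hc : c ≠ 0) :
    ∃ d ∈ OF F, d ≠ 0 ∧ algebraMap F (Fv F v) d / c ∈ Ov F v := by
  obtain ⟨p, hp⟩ := v.intValuation_exists_uniformizer
  have hp0 : p ≠ 0 := by
    rintro rfl
    rw [map_zero] at hp
    exact WithZero.exp_ne_zero hp.symm
  have hc0 : Valued.v c ≠ 0 := by simpa using hc
  obtain ⟨m, hm⟩ : ∃ m : ℤ, Valued.v c = WithZero.exp m := ⟨_, (WithZero.exp_log hc0).symm⟩
  refine ⟨algebraMap _ F (p ^ m.natAbs), (p ^ m.natAbs).2, by simpa using fun h => absurd h hp0, ?_⟩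
  rw [memOv, map_div₀, valF, v.valuation_of_algebraMap, map_pow, hp, hm]
  refine div_le_one_of_le₀ ?_ zero_le
  rw [← WithZero.exp_nsmul, WithZero.exp_le_exp]
  simp only [nsmul_eq_mul]
  omega

theorem finite_bad (d : F) (hd : d ∈ OF F) (h0 : d ≠ 0) :
    {w : HeightOneSpectrum (NumberField.RingOfIntegers F) | w.valuation F d ≠ 1}.Finite := by
  obtain ⟨e, rfl⟩ : ∃ e : NumberField.RingOfIntegers F, algebraMap _ F e = d := ⟨⟨d, hd⟩, rfl⟩
  have hI : Ideal.span {e} ≠ 0 := by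
    rw [Ne, Ideal.zero_eq_bot, Ideal.span_singleton_eq_bot]
    rintro rfl
    exact h0 (map_zero _)
  refine (Ideal.finite_factors hI).subset ?_
  intro w hw
  have h1 := w.valuation_le_one (K := F) e
  exact (w.valuation_lt_one_iff_dvd (K := F) _).1 (lt_of_le_of_ne h1 hw)

theorem exists_v_of_ne_top (I : Ideal (NumberField.RingOfIntegers F)) (hI : I ≠ ⊤) (h0 : I ≠ ⊥) :
    ∃ w : HeightOneSpectrum (NumberField.RingOfIntegers F), I ≤ w.asIdeal := by
  obtain ⟨M, hM, hIM⟩ := Ideal.exists_le_maximal I hI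
  exact ⟨⟨M, hM.isPrime, fun h => h0 (le_bot_iff.1 (h ▸ hIM))⟩, hIM⟩
end QPf

namespace QPf
section bridge
variable {K : Type} [Field K] {O : Subring K} {V : Type} [AddCommGroup V] [Module K V]

theorem ospan_eq (t : Set V) : ospan O t = (Submodule.span O t : Set V) := by
  ext x
  constructor
  · rintro ⟨m, c, g, hc, hg, rfl⟩
    exact Submodule.sum_mem _ fun i _ => smem _ (hc i) (Submodule.subset_span (hg i))
  · intro hx
    obtain ⟨m, f, g, rfl⟩ := Submodule.mem_span_set'.1 hx
    exact ⟨m, fun i => f i, fun i => g i, fun i => (f i).2, fun i => (g i).2, rfl⟩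

theorem isLattice_iff (L : Set V) : IsLattice O L ↔ ∃ S : Submodule O V, S.FG ∧ (S : Set V) = L := by
  constructor
  · rintro ⟨t, rfl⟩
    exact ⟨Submodule.span O t, ⟨t, rfl⟩, (ospan_eq _).symm⟩
  · rintro ⟨S, ⟨t, rfl⟩, rfl⟩
    exact ⟨t, (ospan_eq _).symm⟩

/-- `K` is the fraction field of `O`. -/
def Frac (O : Subring K) : Prop := ∀ a : K, ∃ c ∈ O, c ≠ 0 ∧ c * a ∈ O

theorem full_of_span (hfr : Frac O) (S : Submodule O V)
    (h : Submodule.span K (S : Set V) = ⊤) : Full S := by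
  intro x
  have hx : x ∈ Submodule.span K (S : Set V) := by rw [h]; trivial
  induction hx using Submodule.span_induction with
  | mem x hx => exact ⟨1, O.one_mem, one_ne_zero, by rwa [one_smul]⟩
  | zero => exact ⟨1, O.one_mem, one_ne_zero, by rw [smul_zero]; exact zero_mem _⟩
  | add x y _ _ hx hy =>
    obtain ⟨c, hc, hc0, hcx⟩ := hx
    obtain ⟨d, hd, hd0, hdy⟩ := hy
    refine ⟨c * d, O.mul_mem hc hd, mul_ne_zero hc0 hd0, ?_⟩
    rw [smul_add, mul_smul c d y, mul_comm, mul_smul]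
    exact S.add_mem (smem S hd hcx) (smem S hc hdy)
  | smul a x _ hx =>
    obtain ⟨c, hc, hc0, hcx⟩ := hx
    obtain ⟨d, hd, hd0, hda⟩ := hfr a
    refine ⟨d * c, O.mul_mem hd hc, mul_ne_zero hd0 hc0, ?_⟩
    rw [smul_smul, show d * c * a = (d * a) * c by ring, mul_smul]
    exact smem S hda hcx

theorem span_of_full (S : Submodule O V) (h : Full S) : Submodule.span K (S : Set V) = ⊤ := by
  rw [eq_top_iff]
  rintro x -
  obtain ⟨c, hc, hc0, hcx⟩ := h x
  have := Submodule.smul_mem (Submodule.span K (S : Set V)) c⁻¹ (Submodule.subset_span hcx)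
  rwa [smul_smul, inv_mul_cancel₀ hc0, one_smul] at this

theorem fd_of_full (S : Submodule O V) (hf : S.FG) (h : Full S) : FiniteDimensional K V := by
  obtain ⟨t, rfl⟩ := hf
  refine ⟨⟨t, ?_⟩⟩
  rw [eq_top_iff, ← span_of_full _ h]
  refine Submodule.span_le.2 ?_
  intro x hx
  have : (Submodule.span O (t : Set V)) ≤ (Submodule.span K (t : Set V)).restrictScalars O :=
    Submodule.span_le.2 Submodule.subset_span
  exact this hx

end bridge

variable (F : Type) [Field F] [NumberField F]
  (v : HeightOneSpectrum (NumberField.RingOfIntegers F))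

theorem frac_OF : Frac (OF F) := by
  intro a
  obtain ⟨r, s, hs, rfl⟩ := IsFractionRing.div_surjective (A := NumberField.RingOfIntegers F) a
  have hs0 : algebraMap (NumberField.RingOfIntegers F) F s ≠ 0 := by
    simpa using nonZeroDivisors.ne_zero hs
  refine ⟨algebraMap _ F s, s.2, hs0, ?_⟩
  rw [mul_div_cancel₀ _ hs0]
  exact r.2

theorem frac_Ov : Frac (Ov F v) := by
  intro a
  by_cases ha : Valued.v a ≤ 1
  · exact ⟨1, one_mem _, one_ne_zero, by rwa [one_mul, memOv]⟩
  · have ha0 : a ≠ 0 := by rintro rfl; simp at ha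
    refine ⟨a⁻¹, ?_, inv_ne_zero ha0, by rw [inv_mul_cancel₀ ha0]; exact one_mem _⟩
    rw [memOv, map_inv₀]
    exact inv_le_one_of_one_le₀ (not_le.1 ha).le

instance : IsNoetherianRing (OF F) := inferInstanceAs (IsNoetherianRing (NumberField.RingOfIntegers F))

variable {F} {V : Type} [AddCommGroup V] [Module F V] {W : Type} [AddCommGroup W] [Module F W]

theorem toVv_add (x y : V) : toVv F v (x + y) = toVv F v x + toVv F v y := TensorProduct.tmul_add _ _ _
theorem toVv_smul (c : F) (x : V) : toVv F v (c • x) = algebraMap F (Fv F v) c • toVv F v x := by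
  rw [toVv, toVv, TensorProduct.tmul_smul, TensorProduct.smul_tmul', TensorProduct.smul_tmul', smul_eq_mul, Algebra.smul_def]

theorem Qv_toVv (Q : QuadraticForm F V) (x : V) : Qv F Q v (toVv F v x) = algebraMap F (Fv F v) (Q x) := by
  letI : Invertible (2 : F) := invertibleOfNonzero two_ne_zero
  have := QuadraticForm.baseChange_tmul (A := Fv F v) Q 1 x
  rw [mul_one, ← Algebra.algebraMap_eq_smul_one] at this
  exact this

theorem polar_toVv (Q : QuadraticForm F V) (x y : V) :
    QuadraticMap.polar (Qv F Q v) (toVv F v x) (toVv F v y) = algebraMap F (Fv F v) (QuadraticMap.polar Q x y) := by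
  rw [QuadraticMap.polar, ← toVv_add, Qv_toVv, Qv_toVv, Qv_toVv, QuadraticMap.polar, map_sub, map_sub]

/-- base change of a linear map -/
def bc (σ : W →ₗ[F] V) : Vv F W v →ₗ[Fv F v] Vv F V v := σ.baseChange (Fv F v)

theorem bc_toVv (σ : W →ₗ[F] V) (x : W) : bc v σ (toVv F v x) = toVv F v (σ x) := 
  LinearMap.baseChange_tmul _ _ _

theorem Qv_isom {Q : QuadraticForm F V} {Q' : QuadraticForm F W} (σ : W →ₗ[F] V)
    (hσ : ∀ x, Q (σ x) = Q' x) (x : Vv F W v) : Qv F Q v (bc v σ x) = Qv F Q' v x := by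
  have : (Qv F Q v).comp (bc v σ) = Qv F Q' v := by
    apply baseChange_ext
    intro m
    have h1 := Qv_toVv v Q (σ m)
    have h2 := Qv_toVv v Q' m
    rw [← bc_toVv, hσ, ← h2] at h1
    exact h1
  rw [← this]; rfl

theorem nondeg_Qv [FiniteDimensional F V] (Q : QuadraticForm F V) (hQ : Nondeg Q) :
    Nondeg (Qv F Q v) := by
  classical
  have hsym : (QuadraticMap.polarBilin Q).IsSymm := ⟨fun x y => QuadraticMap.polar_comm Q x y⟩
  have hB : LinearMap.BilinForm.Nondegenerate (QuadraticMap.polarBilin Q) := by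
    rw [LinearMap.BilinForm.Nondegenerate, LinearMap.IsRefl.nondegenerate_iff_separatingLeft hsym.isRefl]
    exact hQ
  let b := Module.finBasis F V
  let b' := LinearMap.BilinForm.dualBasis _ hB b
  let B := b.baseChange (Fv F v)
  intro x hx
  have hB1 : ∀ i, B i = toVv F v (b i) := fun i => Module.Basis.baseChange_apply _ _ _
  rw [← B.sum_repr x]
  refine Finset.sum_eq_zero fun j _ => ?_
  have h := hx (toVv F v (b' j))
  rw [← B.sum_repr x] at h
  change QuadraticMap.polarBilin (Qv F Q v) _ _ = 0 at h
  rw [map_sum, LinearMap.sum_apply, Finset.sum_eq_single j] at h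
  · rw [map_smul, LinearMap.smul_apply, hB1, QuadraticMap.polarBilin_apply_apply, polar_toVv] at h
    have h3 := LinearMap.BilinForm.apply_dualBasis_right hB ⟨fun x y => QuadraticMap.polar_comm Q x y⟩ b j j
    rw [if_pos rfl] at h3
    change QuadraticMap.polar Q (b j) (b' j) = 1 at h3
    rw [h3, map_one, smul_eq_mul, mul_one] at h
    rw [h, zero_smul]
  · intro i _ hij
    rw [map_smul, LinearMap.smul_apply, hB1, QuadraticMap.polarBilin_apply_apply, polar_toVv]
    have h3 := LinearMap.BilinForm.apply_dualBasis_right hB ⟨fun x y => QuadraticMap.polar_comm Q x y⟩ b i j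
    rw [if_neg hij] at h3
    change QuadraticMap.polar Q (b i) (b' j) = 0 at h3
    rw [h3, map_zero, smul_zero]
  · simp

/-- completion of a lattice as a submodule -/
def LvS (L : Submodule (OF F) V) : Submodule (Ov F v) (Vv F V v) :=
  Submodule.span (Ov F v) (toVv F v '' (L : Set V))

theorem Lv_eq (L : Submodule (OF F) V) : Lv F (L : Set V) v = (LvS v L : Set (Vv F V v)) := ospan_eq _

theorem mem_LvS {L : Submodule (OF F) V} {x : V} (hx : x ∈ L) : toVv F v x ∈ LvS v L :=
  Submodule.subset_span ⟨x, hx, rfl⟩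

theorem LvS_le (L : Submodule (OF F) V) (M : Submodule (Ov F v) (Vv F V v))
    (h : ∀ x ∈ L, toVv F v x ∈ M) : LvS v L ≤ M := by
  refine Submodule.span_le.2 ?_
  rintro _ ⟨x, hx, rfl⟩
  exact h x hx

theorem LvS_fg {L : Submodule (OF F) V} (hL : L.FG) : (LvS v L).FG := by
  classical
  obtain ⟨t, rfl⟩ := hL
  refine ⟨t.image (toVv F v), ?_⟩
  apply le_antisymm
  · refine Submodule.span_mono ?_
    rw [Finset.coe_image]
    exact Set.image_mono Submodule.subset_span
  · refine LvS_le v _ _ ?_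
    intro x hx
    induction hx using Submodule.span_induction with
    | mem x hx => exact Submodule.subset_span (by rw [Finset.coe_image]; exact ⟨x, hx, rfl⟩)
    | zero =>
      have : toVv F v (0 : V) = 0 := TensorProduct.tmul_zero _ _
      rw [this]; exact zero_mem _
    | add x y _ _ hx hy => rw [toVv_add]; exact add_mem hx hy
    | smul a x _ hx =>
      have : a • x = (a : F) • x := rfl
      rw [this, toVv_smul]
      exact smem _ (memOF_Ov F v _ a.2) hx

theorem LvS_full {L : Submodule (OF F) V} (hL : Full L) : Full (LvS v L) := by
  apply full_of_span (frac_Ov F v)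
  rw [eq_top_iff]
  rintro x -
  induction x using TensorProduct.induction_on with
  | zero => exact zero_mem _
  | add x y hx hy => exact add_mem hx hy
  | tmul a y =>
    obtain ⟨c, hc, hc0, hcy⟩ := hL y
    have h1 : a ⊗ₜ[F] y = (a / algebraMap F (Fv F v) c) • toVv F v (c • y) := by
      have hc1 : algebraMap F (Fv F v) c ≠ 0 := by simpa using hc0
      rw [toVv_smul, smul_smul, div_mul_cancel₀ _ hc1, toVv, TensorProduct.smul_tmul', smul_eq_mul, mul_one]
    rw [h1]
    exact Submodule.smul_mem _ _ (Submodule.subset_span (mem_LvS v hcy))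

theorem LvS_integ {L : Submodule (OF F) V} {Q : QuadraticForm F V} (hL : Integ Q L) :
    Integ (Qv F Q v) (LvS v L) := by
  have hp : ∀ x ∈ LvS v L, ∀ y ∈ LvS v L, QuadraticMap.polar (Qv F Q v) x y ∈ Ov F v := by
    intro x hx y hy
    induction hx, hy using Submodule.span_induction₂ with
    | mem_mem x y hx hy =>
      obtain ⟨x, hx, rfl⟩ := hx
      obtain ⟨y, hy, rfl⟩ := hy
      rw [polar_toVv]
      exact memOF_Ov F v _ (polar_mem hL hx hy)
    | zero_left y hy => rw [QuadraticMap.polar_zero_left]; exact zero_mem _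
    | zero_right y hy => rw [QuadraticMap.polar_zero_right]; exact zero_mem _
    | add_left x y z _ _ _ h1 h2 => rw [QuadraticMap.polar_add_left]; exact add_mem h1 h2
    | add_right x y z _ _ _ h1 h2 => rw [QuadraticMap.polar_add_right]; exact add_mem h1 h2
    | smul_left r x y _ _ h => 
      change QuadraticMap.polar _ ((r : Fv F v) • x) y ∈ _
      rw [QuadraticMap.polar_smul_left]; exact mul_mem r.2 h
    | smul_right r x y _ _ h => 
      change QuadraticMap.polar _ x ((r : Fv F v) • y) ∈ _
      rw [QuadraticMap.polar_smul_right]; exact mul_mem r.2 h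
  intro x hx
  induction hx using Submodule.span_induction with
  | mem x hx =>
    obtain ⟨x, hx, rfl⟩ := hx
    rw [Qv_toVv]
    exact memOF_Ov F v _ (hL _ hx)
  | zero => rw [QuadraticMap.map_zero]; exact zero_mem _
  | add x y h1 h2 hx hy => 
    rw [QuadraticMap.map_add (Qv F Q v)]
    exact add_mem (add_mem hx hy) (hp x h1 y h2)
  | smul a x _ hx =>
    change Qv F Q v ((a : Fv F v) • x) ∈ _
    rw [QuadraticMap.map_smul]
    exact mul_mem (mul_mem a.2 a.2) hx

end QPf

namespace QPf
variable {F : Type} [Field F] [NumberField F]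
  (v : HeightOneSpectrum (NumberField.RingOfIntegers F))
  {V : Type} [AddCommGroup V] [Module F V]

theorem toVv_sub (x y : V) : toVv F v (x - y) = toVv F v x - toVv F v y := TensorProduct.tmul_sub _ _ _
theorem toVv_zero : toVv F v (0 : V) = 0 := TensorProduct.tmul_zero _ _

theorem vapprox {L : Submodule (OF F) V} (hL : Full L) (x : Vv F V v) :
    ∃ y : V, x - toVv F v y ∈ LvS v L ∧ ∀ w, w ≠ v → toVv F w y ∈ LvS w L := by
  induction x using TensorProduct.induction_on with
  | zero => exact ⟨0, by rw [toVv_zero, sub_zero]; exact zero_mem _,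
      fun w _ => by rw [toVv_zero]; exact zero_mem _⟩
  | add x y hx hy =>
    obtain ⟨x', hx1, hx2⟩ := hx
    obtain ⟨y', hy1, hy2⟩ := hy
    refine ⟨x' + y', ?_, fun w hw => ?_⟩
    · rw [toVv_add, add_sub_add_comm]; exact add_mem hx1 hy1
    · rw [toVv_add]; exact add_mem (hx2 w hw) (hy2 w hw)
  | tmul a y =>
    obtain ⟨c, hc, hc0, hcy⟩ := hL y
    have h1 : a ⊗ₜ[F] y = (a / algebraMap F (Fv F v) c) • toVv F v (c • y) := by
      have hc1 : algebraMap F (Fv F v) c ≠ 0 := by simpa using hc0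
      rw [toVv_smul, smul_smul, div_mul_cancel₀ _ hc1, toVv, TensorProduct.smul_tmul', smul_eq_mul,
        mul_one]
    rw [h1]
    obtain ⟨b, hb, hbw⟩ := sapprox F v (a / algebraMap F (Fv F v) c)
    refine ⟨b • c • y, ?_, fun w hw => ?_⟩
    · have e := (sub_smul (a / algebraMap F (Fv F v) c) (algebraMap F (Fv F v) b) (toVv F v (c • y))).symm
      rw [toVv_smul _ b, e]
      refine smem _ ?_ (mem_LvS v hcy)
      rw [← neg_sub]
      exact neg_mem hb
    · rw [toVv_smul _ b]
      refine smem _ ?_ (mem_LvS w hcy)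
      rw [memOv, valF]
      exact hbw w hw

theorem unit_mem {L : Submodule (OF F) V} {s : F} (hs : v.valuation F s = 1) {y : V} 
    (h : s • y ∈ L) : toVv F v y ∈ LvS v L := by
  have hs0 : s ≠ 0 := by rintro rfl; simp at hs
  have : y = s⁻¹ • s • y := by rw [smul_smul, inv_mul_cancel₀ hs0, one_smul]
  rw [this, toVv_smul]
  refine smem _ ?_ (mem_LvS v h)
  rw [memOv, valF, map_inv₀, hs, inv_one]

theorem locmem_aux {L : Submodule (OF F) V} (c : F) (hc0 : c ≠ 0) (hc : c ∈ OF F) (x : Vv F V v) (hx : x ∈ LvS v L) :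
    ∃ (y : V) (s : F), s ∈ OF F ∧ v.valuation F s = 1 ∧ s • y ∈ L ∧ 
      ∃ u ∈ LvS v L, x - toVv F v y = algebraMap F (Fv F v) c • u := by
  induction hx using Submodule.span_induction with
  | mem x hx =>
    obtain ⟨x, hx, rfl⟩ := hx
    exact ⟨x, 1, one_mem _, map_one _, by rwa [one_smul], 0, zero_mem _, by simp⟩
  | zero => exact ⟨0, 1, one_mem _, map_one _, by simp, 0, zero_mem _, by simp [toVv_zero]⟩
  | add x y _ _ hx hy =>
    obtain ⟨x', s, hs, hs1, hsx, u, hu, hxu⟩ := hx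
    obtain ⟨y', t, ht, ht1, hty, u', hu', hyu⟩ := hy
    refine ⟨x' + y', s * t, mul_mem hs ht, by rw [map_mul, hs1, ht1, one_mul], ?_, u + u', 
      add_mem hu hu', ?_⟩
    · rw [smul_add, mul_smul s t y', mul_comm, mul_smul]
      exact add_mem (smem L ht hsx) (smem L hs hty)
    · rw [toVv_add, add_sub_add_comm, hxu, hyu, smul_add]
  | smul a x _ hx =>
    obtain ⟨y, s, hs, hs1, hsx, u, hu, hxu⟩ := hx
    have hc1 : algebraMap F (Fv F v) c ≠ 0 := by simpa using hc0
    obtain ⟨b, hb⟩ := dense_int F v ((a : Fv F v) / algebraMap F (Fv F v) c)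
    have hcb : v.valuation F (c * b) ≤ 1 := by
      rw [← valF, ← memOv, map_mul]
      have : algebraMap F (Fv F v) c * algebraMap F (Fv F v) b =
        algebraMap F (Fv F v) c * (algebraMap F (Fv F v) b - (a : Fv F v) / algebraMap F (Fv F v) c) + a := by
        field_simp
        ring
      rw [this]
      exact add_mem (mul_mem (memOF_Ov F v c hc) hb) a.2
    obtain ⟨t, ht, ht1, htb⟩ := loc_den F v _ hcb
    refine ⟨(c * b) • y, t * s, mul_mem ht hs, by rw [map_mul, hs1, ht1, one_mul], ?_,
      (a : Fv F v) • u - (algebraMap F (Fv F v) b - (a : Fv F v) / algebraMap F (Fv F v) c) • toVv F v y,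
      sub_mem (smem _ a.2 hu) (smem _ hb (unit_mem v hs1 hsx)), ?_⟩
    · rw [smul_smul, show t * s * (c * b) = (t * (c * b)) * s by ring, mul_smul]
      exact smem L htb hsx
    · change (a : Fv F v) • x - _ = _
      have hx2 : x = toVv F v y + algebraMap F (Fv F v) c • u := by rw [← hxu]; abel
      rw [hx2, toVv_smul, map_mul]
      rw [smul_sub, smul_smul, smul_smul, smul_add, smul_smul]
      have : algebraMap F (Fv F v) c * (algebraMap F (Fv F v) b - (a : Fv F v) / algebraMap F (Fv F v) c) =
        algebraMap F (Fv F v) c * algebraMap F (Fv F v) b - a := by field_simp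
      rw [this, sub_smul, mul_comm (a : Fv F v)]
      abel

theorem locmem {L : Submodule (OF F) V} (hfg : L.FG) (hL : Full L) (x : V)
    (hx : toVv F v x ∈ LvS v L) : ∃ s ∈ OF F, v.valuation F s = 1 ∧ s • x ∈ L := by
  classical
  have : FiniteDimensional F V := fd_of_full L hfg hL
  let b := Module.finBasis F V
  choose k hk hk0 hkb using fun i => hL (b i)
  let e := b.unitsSMul (fun i => Units.mk0 (k i) (hk0 i))
  have he : ∀ i, e i ∈ L := fun i => by
    rw [Module.Basis.unitsSMul_apply]; exact hkb i
  let E : Submodule (OF F) V := Submodule.span (OF F) (Set.range e)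
  have hEL : E ≤ L := Submodule.span_le.2 (by rintro _ ⟨i, rfl⟩; exact he i)
  have hE : Full E := by
    apply full_of_span (frac_OF F)
    rw [eq_top_iff, ← e.span_eq]
    exact Submodule.span_mono Submodule.subset_span
  obtain ⟨c, hc, hc0, hcL⟩ := absorb hfg hE
  obtain ⟨y, s, hs, hs1, hsy, u, hu, hxu⟩ := locmem_aux v c hc0 hc _ hx
  let B := e.baseChange (Fv F v)
  have hB : ∀ i, B i = toVv F v (e i) := fun i => Module.Basis.baseChange_apply _ _ _
  let C : Submodule (Ov F v) (Vv F V v) := Submodule.span (Ov F v) (Set.range B)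
  have hEC : LvS v E ≤ C := by
    apply LvS_le
    intro z hz
    induction hz using Submodule.span_induction with
    | mem z hz => 
      obtain ⟨i, rfl⟩ := hz
      rw [← hB]; exact Submodule.subset_span ⟨i, rfl⟩
    | zero => rw [toVv_zero]; exact zero_mem _
    | add x y _ _ hx hy => rw [toVv_add]; exact add_mem hx hy
    | smul a x _ hx =>
      change toVv F v ((a : F) • x) ∈ _
      rw [toVv_smul]
      exact smem _ (memOF_Ov F v _ a.2) hx
  have hcu : algebraMap F (Fv F v) c • u ∈ C := by
    apply hEC
    clear hxu
    induction hu using Submodule.span_induction with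
    | mem z hz => 
      obtain ⟨z, hz, rfl⟩ := hz
      rw [← toVv_smul]
      exact mem_LvS v (hcL z hz)
    | zero => rw [smul_zero]; exact zero_mem _
    | add x y _ _ hx hy => rw [smul_add]; exact add_mem hx hy
    | smul a x _ hx =>
      change _ • (a : Fv F v) • x ∈ _
      rw [smul_comm]
      exact smem _ a.2 hx
  rw [← hxu, ← toVv_sub] at hcu
  have hco : ∀ i, v.valuation F (e.repr (x - y) i) ≤ 1 := by
    intro i
    have h := (B.mem_span_iff_repr_mem (Ov F v) _).1 hcu i
    obtain ⟨r, hr⟩ := h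
    have h2 : B.repr (toVv F v (x - y)) i = algebraMap F (Fv F v) (e.repr (x - y) i) := by
      simp [B, toVv, Module.Basis.baseChange_repr_tmul, Algebra.smul_def]
    rw [h2] at hr
    rw [← valF, ← memOv, ← hr]
    exact r.2
  choose t ht ht1 hte using fun i => loc_den F v _ (hco i)
  have hz : (∏ i, t i) • (x - y) ∈ L := by
    rw [← e.sum_repr (x - y), Finset.smul_sum]
    refine sum_mem fun i _ => ?_
    rw [smul_smul, ← Finset.prod_erase_mul _ _ (Finset.mem_univ i), mul_assoc, mul_smul]
    exact smem L (prod_mem fun j _ => ht j) (smem L (hte i) (he i))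
  refine ⟨(∏ i, t i) * s, mul_mem (prod_mem fun j _ => ht j) hs, ?_, ?_⟩
  · rw [map_mul, map_prod, hs1, mul_one]
    exact Finset.prod_eq_one fun i _ => ht1 i
  · rw [show x = (x - y) + y by abel, smul_add]
    refine add_mem ?_ ?_
    · rw [mul_comm, mul_smul]; exact smem L hs hz
    · rw [mul_smul]; exact smem L (prod_mem fun j _ => ht j) hsy

theorem lemA {L : Submodule (OF F) V} (hfg : L.FG) (hL : Full L) (x : V)
    (hx : ∀ w, toVv F w x ∈ LvS w L) : x ∈ L := by
  let I : Ideal (NumberField.RingOfIntegers F) := 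
    { carrier := {a | (algebraMap _ F a) • x ∈ L}
      add_mem' := fun {a b} ha hb => by
        change (algebraMap _ F (a + b)) • x ∈ L
        rw [map_add, add_smul]; exact add_mem ha hb
      zero_mem' := by
        change (algebraMap _ F 0) • x ∈ L
        rw [map_zero, zero_smul]; exact zero_mem _
      smul_mem' := fun c a ha => by
        change (algebraMap _ F (c * a)) • x ∈ L
        rw [map_mul, mul_smul]; exact smem L c.2 ha }
  have hI : ∀ a, a ∈ I ↔ (algebraMap _ F a) • x ∈ L := fun a => Iff.rfl
  by_contra hxL
  have h1 : I ≠ ⊤ := by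
    intro h
    rw [Ideal.eq_top_iff_one, hI, map_one, one_smul] at h
    exact hxL h
  have h2 : I ≠ ⊥ := by
    intro h
    obtain ⟨c, hc, hc0, hcx⟩ := hL x
    obtain ⟨c', rfl⟩ : ∃ e : NumberField.RingOfIntegers F, algebraMap _ F e = c := ⟨⟨c, hc⟩, rfl⟩
    have : c' ∈ I := hcx
    rw [h, Ideal.mem_bot] at this
    rw [this, map_zero] at hc0
    exact hc0 rfl
  obtain ⟨w, hw⟩ := exists_v_of_ne_top F I h1 h2
  obtain ⟨s, hs, hs1, hsx⟩ := locmem w hfg hL x (hx w)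
  obtain ⟨s', rfl⟩ : ∃ e : NumberField.RingOfIntegers F, algebraMap _ F e = s := ⟨⟨s, hs⟩, rfl⟩
  have : s' ∈ w.asIdeal := hw hsx
  exact (w.valuation_eq_one_iff_notMem).1 hs1 this

theorem lemB {Q : QuadraticForm F V} {L : Submodule (OF F) V} (hfg : L.FG) (hL : Full L)
    (hm : IsMaximal (OF F) Q (L : Set V)) : Max (Qv F Q v) (LvS v L) := by
  have hint : Integ Q L := hm.1
  refine ⟨LvS_integ v hint, LvS_full v hL, ?_⟩
  intro M hLM hM x hx
  obtain ⟨y, hy, hyw⟩ := vapprox v hL x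
  have hyM : toVv F v y ∈ M := by
    have := sub_mem hx (hLM hy)
    rwa [sub_sub_cancel] at this
  let L' : Submodule (OF F) V := L ⊔ Submodule.span (OF F) {y}
  have hyL' : y ∈ L' := Submodule.mem_sup_right (Submodule.mem_span_singleton_self y)
  have hfull : Full L' := fun z => by
    obtain ⟨c, hc, hc0, hz⟩ := hL z
    exact ⟨c, hc, hc0, Submodule.mem_sup_left hz⟩
  have h := hm.2 (L' : Set V) ((isLattice_iff _).2 ⟨L', hfg.sup (Submodule.fg_span_singleton y), rfl⟩)
    (by rw [span_of_full _ hfull, span_of_full _ hL]) (fun z hz => Submodule.mem_sup_left hz) ?_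
  · have hyL : y ∈ (L : Set V) := by rw [← h]; exact hyL'
    have := add_mem hy (mem_LvS v hyL)
    rwa [sub_add_cancel] at this
  · intro z hz
    obtain ⟨l, hl, q, hq, rfl⟩ := Submodule.mem_sup.1 hz
    obtain ⟨a, rfl⟩ := Submodule.mem_span_singleton.1 hq
    rw [memOF]
    intro w
    rw [← valF, ← Qv_toVv, ← memOv]
    change Qv F Q w (toVv F w (l + (a : F) • y)) ∈ _
    rw [toVv_add, toVv_smul]
    by_cases hw : w = v
    · subst hw
      exact hM _ (add_mem (hLM (mem_LvS _ hl)) (smem _ (memOF_Ov F _ _ a.2) hyM))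
    · exact LvS_integ w hint _ (add_mem ((mem_LvS _ hl)) (smem _ (memOF_Ov F _ _ a.2) (hyw w hw)))

end QPf

namespace QPf
variable {F : Type} [Field F] [NumberField F]
  {V : Type} [AddCommGroup V] [Module F V]

theorem loc_den_mod (v : HeightOneSpectrum (NumberField.RingOfIntegers F))
    (A B : Submodule (Ov F v) (Vv F V v)) (hA : A.FG) (hB : B.FG) (hA' : Full A) (hB' : Full B) :
    ∃ d ∈ OF F, d ≠ 0 ∧ (∀ x ∈ A, algebraMap F (Fv F v) d • x ∈ B) ∧
      ∀ x ∈ B, algebraMap F (Fv F v) d • x ∈ A := by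
  obtain ⟨a, ha, ha0, hab⟩ := absorb hA hB'
  obtain ⟨b, hb, hb0, hba⟩ := absorb hB hA'
  obtain ⟨d, hd, hd0, hdc⟩ := exists_glob F v (a * b) (mul_ne_zero ha0 hb0)
  have h1 : algebraMap F (Fv F v) d = algebraMap F (Fv F v) d / (a * b) * b * a := by
    field_simp
  have h2 : algebraMap F (Fv F v) d = algebraMap F (Fv F v) d / (a * b) * a * b := by
    field_simp
  refine ⟨d, hd, hd0, fun x hx => ?_, fun x hx => ?_⟩
  · rw [h1, mul_smul]; exact smem _ (mul_mem hdc hb) (hab x hx)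
  · rw [h2, mul_smul]; exact smem _ (mul_mem hdc ha) (hba x hx)

theorem glue {L : Submodule (OF F) V} (hfg : L.FG) (hL : Full L)
    (S : Finset (HeightOneSpectrum (NumberField.RingOfIntegers F)))
    (M : ∀ v : HeightOneSpectrum (NumberField.RingOfIntegers F), Submodule (Ov F v) (Vv F V v))
    (hM1 : ∀ v, (M v).FG) (hM2 : ∀ v, Full (M v)) (hM3 : ∀ v, v ∉ S → M v = LvS v L) :
    ∃ L' : Submodule (OF F) V, L'.FG ∧ Full L' ∧ (∀ v, LvS v L' = M v) ∧
      ∀ x, x ∈ L' ↔ ∀ v, toVv F v x ∈ M v := by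
  classical
  choose e he he0 he1 he2 using fun v => loc_den_mod v (LvS v L) (M v) (LvS_fg v hfg) (hM1 v) (LvS_full v hL) (hM2 v)
  let d := ∏ v ∈ S, e v
  have hd : d ∈ OF F := prod_mem fun v _ => he v
  have hd0 : d ≠ 0 := Finset.prod_ne_zero_iff.2 fun v _ => he0 v
  have hdd : ∀ v ∈ S, ∃ c ∈ OF F, d = c * e v := fun v hv =>
    ⟨∏ w ∈ S.erase v, e w, prod_mem fun v _ => he v, (Finset.prod_erase_mul _ _ hv).symm⟩
  have hd1 : ∀ v, ∀ x ∈ LvS v L, algebraMap F (Fv F v) d • x ∈ M v := by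
    intro v x hx
    by_cases hv : v ∈ S
    · obtain ⟨c, hc, h⟩ := hdd v hv
      rw [h, map_mul, mul_smul]
      exact smem _ (memOF_Ov F v _ hc) (he1 v x hx)
    · rw [hM3 v hv]
      exact smem _ (memOF_Ov F v _ hd) hx
  have hd2 : ∀ v, ∀ x ∈ M v, algebraMap F (Fv F v) d • x ∈ LvS v L := by
    intro v x hx
    by_cases hv : v ∈ S
    · obtain ⟨c, hc, h⟩ := hdd v hv
      rw [h, map_mul, mul_smul]
      exact smem _ (memOF_Ov F v _ hc) (he2 v x hx)
    · rw [hM3 v hv] at hx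
      exact smem _ (memOF_Ov F v _ hd) hx
  let L' : Submodule (OF F) V :=
    { carrier := {x | ∀ v, toVv F v x ∈ M v}
      add_mem' := fun {a b} ha hb v => by
        rw [toVv_add]; exact add_mem (ha v) (hb v)
      zero_mem' := fun v => by rw [toVv_zero]; exact zero_mem _
      smul_mem' := fun c x hx v => by
        change toVv F v ((c : F) • x) ∈ M v
        rw [toVv_smul]
        exact smem _ (memOF_Ov F v _ c.2) (hx v) }
  have hL' : ∀ x, x ∈ L' ↔ ∀ v, toVv F v x ∈ M v := fun x => Iff.rfl
  have hfull : Full L' := by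
    intro x
    obtain ⟨c, hc, hc0, hcx⟩ := hL x
    refine ⟨d * c, mul_mem hd hc, mul_ne_zero hd0 hc0, ?_⟩
    rw [hL']
    intro v
    rw [mul_smul, toVv_smul]
    exact hd1 v _ (mem_LvS v hcx)
  refine ⟨L', ?_, hfull, ?_, hL'⟩
  · have hinj : Function.Injective (LinearMap.lsmul (OF F) V ⟨d, hd⟩) := by
      intro x y hxy
      exact smul_right_injective V hd0 hxy
    refine Submodule.fg_of_fg_map_injective _ hinj ?_
    have hle : L'.map (LinearMap.lsmul (OF F) V ⟨d, hd⟩) ≤ L := by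
      rintro _ ⟨x, hx, rfl⟩
      change d • x ∈ L
      refine lemA hfg hL _ fun v => ?_
      rw [toVv_smul]
      exact hd2 v _ (hx v)
    have : IsNoetherian (OF F) L := isNoetherian_of_fg_of_noetherian _ hfg
    exact Submodule.FG.of_le hfg hle
  · intro v
    apply le_antisymm
    · exact LvS_le v _ _ fun x hx => hx v
    · intro x hx
      obtain ⟨y, hy, hyw⟩ := vapprox v hfull x
      have hle : ∀ w, LvS w L' ≤ M w := fun w => LvS_le w _ _ fun x hx => hx w
      have hyL : y ∈ L' := by
        rw [hL']
        intro w
        by_cases hw : w = v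
        · subst hw
          have := sub_mem hx (hle _ hy)
          rwa [sub_sub_cancel] at this
        · exact hle w (hyw w hw)
      have := add_mem hy (mem_LvS v hyL)
      rwa [sub_add_cancel] at this

theorem main_i (Q : QuadraticForm F V) (hQ : Nondeg Q) (L : Submodule (OF F) V) (hfg : L.FG)
    (hL : Full L) (hcls : ClassNumberOne F Q (L : Set V)) (n : ℕ)
    (hloc : IsLocADC F Q (L : Set V) n) : IsGlobADC F Q (L : Set V) n := by
  classical
  intro W _ _ Q' hQ' _ hdim N hN hNint hrep
  obtain ⟨σ, hσi, hσ⟩ := hrep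
  obtain ⟨⟨N, hNfg, rfl⟩, hNspan⟩ := And.imp_left (isLattice_iff N).1 hN
  have hNfull : Full N := full_of_span (frac_OF F) N hNspan
  have : FiniteDimensional F W := fd_of_full N hNfg hNfull
  obtain ⟨d, hd, hd0, hdN⟩ := absorb (hNfg.map (σ.restrictScalars (OF F))) hL
  have hfin := finite_bad F d hd hd0
  have key : ∀ v : HeightOneSpectrum (NumberField.RingOfIntegers F),
      ∃ g : Vv F V v ≃ₗ[Fv F v] Vv F V v, (∀ x, Qv F Q v (g x) = Qv F Q v x) ∧
        (∀ x ∈ N, ∃ y ∈ LvS v L, g y = toVv F v (σ x)) ∧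
        (v ∉ hfin.toFinset → ∀ x, g x = x) := by
    intro v
    by_cases hv : v ∈ hfin.toFinset
    · obtain ⟨τ, hτi, hτ, hτN⟩ := hloc v (Vv F W v) (Qv F Q' v) (nondeg_Qv v Q' hQ')
        (by rw [← hdim]; exact Module.finrank_baseChange) (LvS v N : Set (Vv F W v))
        ⟨(isLattice_iff _).2 ⟨_, LvS_fg v hNfg, rfl⟩, span_of_full _ (LvS_full v hNfull)⟩
        (LvS_integ v (Q := Q') hNint)
        ⟨bc v σ, inj_of_isom (nondeg_Qv v Q' hQ') _ (Qv_isom v σ hσ), Qv_isom v σ hσ⟩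
      obtain ⟨g, hg, hgτ⟩ := witt (two_ne F v) (Qv F Q' v) (nondeg_Qv v Q' hQ') (Qv F Q v) τ (bc v σ)
        hτ (Qv_isom v σ hσ)
      refine ⟨g, hg, fun x hx => ⟨τ (toVv F v x), ?_, ?_⟩, fun h => absurd hv h⟩
      · have := hτN ⟨_, mem_LvS v hx, rfl⟩
        rwa [Lv_eq] at this
      · rw [hgτ, bc_toVv]
    · refine ⟨LinearEquiv.refl _ _, fun x => rfl, fun x hx => ⟨_, ?_, rfl⟩, fun _ x => rfl⟩
      have h1 : v.valuation F d = 1 := by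
        by_contra h
        exact hv (hfin.mem_toFinset.2 h)
      exact unit_mem v h1 (hdN _ ⟨x, hx, rfl⟩)
  choose g hg hgN hgS using key
  obtain ⟨L', hfg', hfull', hLv, hL'⟩ := glue hfg hL hfin.toFinset
    (fun v => (LvS v L).map ((g v).toLinearMap.restrictScalars (Ov F v)))
    (fun v => (LvS_fg v hfg).map _)
    (fun v x => by
      obtain ⟨c, hc, hc0, hcx⟩ := LvS_full v hL ((g v).symm x)
      refine ⟨c, hc, hc0, _, hcx, ?_⟩
      change g v (c • (g v).symm x) = _
      rw [map_smul, LinearEquiv.apply_symm_apply])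
    (fun v hv => by
      ext x
      constructor
      · rintro ⟨y, hy, rfl⟩
        change g v y ∈ _
        rw [hgS v hv]; exact hy
      · intro hx
        exact ⟨x, hx, hgS v hv x⟩)
  obtain ⟨ρ, hρi, hρ, hρL⟩ := hcls V Q hQ (L' : Set V)
    ⟨(isLattice_iff _).2 ⟨L', hfg', rfl⟩, span_of_full _ hfull'⟩
    ⟨LinearEquiv.refl _ _, fun _ => rfl⟩
    (fun v => by
      refine ⟨(g v).symm.toLinearMap, (g v).symm.injective, fun x => ?_, ?_⟩
      · have := hg v ((g v).symm x)
        rw [LinearEquiv.apply_symm_apply] at this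
        exact this.symm
      · rw [Lv_eq, Lv_eq, hLv]
        ext x
        constructor
        · rintro ⟨_, ⟨y, hy, rfl⟩, rfl⟩
          change (g v).symm (g v y) ∈ _
          rw [LinearEquiv.symm_apply_apply]
          exact hy
        · intro hx
          exact ⟨g v x, ⟨x, hx, rfl⟩, (g v).symm_apply_apply x⟩)
  refine ⟨ρ ∘ₗ σ, hρi.comp hσi, fun x => by rw [LinearMap.comp_apply, hρ, hσ], ?_⟩
  rintro _ ⟨x, hx, rfl⟩
  rw [← hρL]
  refine ⟨σ x, ?_, rfl⟩
  refine (hL' _).2 fun v => ?_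
  obtain ⟨y, hy, h⟩ := hgN v x hx
  exact ⟨y, hy, h⟩

theorem main_ii (Q : QuadraticForm F V) (hQ : Nondeg Q) (L : Submodule (OF F) V) (hfg : L.FG)
    (hL : Full L) (n : ℕ) (hm : IsMaximal (OF F) Q (L : Set V)) : IsLocADC F Q (L : Set V) n := by
  intro v W _ _ Q' hQ' _ N hN hNint hrep
  obtain ⟨σ, _, hσ⟩ := hrep
  obtain ⟨⟨N, hNfg, rfl⟩, _⟩ := And.imp_left (isLattice_iff N).1 hN
  have : FiniteDimensional F V := fd_of_full L hfg hL
  obtain ⟨ρ, hρ, hρN⟩ := max_adc (locData F v) (two_ne F v) (Qv F Q v) (nondeg_Qv v Q hQ) (LvS v L)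
    (lemB v hfg hL hm) Q' N hNfg hNint σ hσ
  refine ⟨ρ, inj_of_isom hQ' ρ hρ, hρ, ?_⟩
  rintro _ ⟨x, hx, rfl⟩
  rw [Lv_eq]
  exact hρN x hx
end QPf

/-- Let `F` be a totally real number field, `L` a positive definite
integral `O_F`-lattice of class number one, and `n` a positive integer.
(i) If `L` is locally `n`-ADC, then `L` is globally `n`-ADC.
(ii) If `L` is `O_F`-maximal, then `L` is globally `n`-ADC. -/
theorem classNumberOne_locADC_or_maximal_implies_globADC
    (F : Type) [Field F] [NumberField F] (hF : TotallyReal F)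
    {V : Type} [AddCommGroup V] [Module F V]
    (Q : QuadraticForm F V) (hQ : Nondeg Q) (hQpos : PosDef F Q)
    (L : Set V) (hL : IsLatticeOn (OF F) L) (hLint : IsIntegral (OF F) Q L)
    (hcls : ClassNumberOne F Q L) (n : ℕ) (hn : 1 ≤ n) :
    (IsLocADC F Q L n → IsGlobADC F Q L n) ∧
    (IsMaximal (OF F) Q L → IsGlobADC F Q L n) := by
  obtain ⟨hl, hsp⟩ := hL
  obtain ⟨S, hfg, rfl⟩ := (QPf.isLattice_iff L).1 hl
  have hfull := QPf.full_of_span (QPf.frac_OF F) S hsp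
  exact ⟨fun h => QPf.main_i Q hQ S hfg hfull hcls n h,
    fun h => QPf.main_i Q hQ S hfg hfull hcls n (QPf.main_ii Q hQ S hfg hfull n h)⟩
end
end

section
/- Let F be a number field, V a nondegenerate quadratic space over F, and 𝔭 a finite place of F with completion F_𝔭. For every nondegenerate F_𝔭-subspace U' of V_𝔭 := F_𝔭 ⊗_F V, there exists an F-subspace U of V such that U_𝔭 := F_𝔭 ⊗_F U is isometric to U' as a quadratic space over F_𝔭. -/
set_option synthInstance.maxHeartbeats 1000000

/-
Quadratic lattices over (local and global) fields, following
"On n-ADC integral quadratic lattices over totally real number fields".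

A non-archimedean local field of characteristic ≠ 2 is formalized as a field `K`
together with a valuation subring `O` of `K` which is a complete discrete valuation
ring with finite residue field (completeness is expressed as adic completeness with
respect to the maximal ideal); `K` is automatically the fraction field of `O`.
-/

noncomputable section

open scoped TensorProduct
open IsDedekindDomain

open QLat QGlob IsDedekindDomain

namespace Approx

open Filter Topology

/-- Elements near `1` in the completion are squares. -/
lemma eventually_square (F : Type) [Field F] [NumberField F]
    (v : HeightOneSpectrum (NumberField.RingOfIntegers F)) :
    ∀ᶠ x in 𝓝 (1 : v.adicCompletion F), ∃ c : v.adicCompletion F, c * c = x := by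
  let _ : NontriviallyNormedField (v.adicCompletion F) :=
    Valued.toNontriviallyNormedField (v.adicCompletion F) (WithZero (Multiplicative ℤ))
  have h2 : (2 : v.adicCompletion F) ≠ 0 := by
    have := (algebraMap F (v.adicCompletion F)).injective.ne (two_ne_zero (α := F))
    rwa [map_ofNat, map_zero] at this
  have hd : HasStrictDerivAt (fun x : v.adicCompletion F => x * x) (1 * 1 + 1 * 1) 1 :=
    (hasStrictDerivAt_id (1 : v.adicCompletion F)).mul (hasStrictDerivAt_id _)
  have hm := hd.map_nhds_eq (by rw [mul_one, one_add_one_eq_two]; exact h2)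
  rw [mul_one] at hm
  rw [← hm, eventually_map]
  exact Eventually.of_forall fun x => ⟨x, rfl⟩

section GS

variable {F K V W : Type} [Field F] [Field K] [Algebra F K] [TopologicalSpace K]
  [IsTopologicalRing K] [ContinuousInv₀ K] [T1Space K]
  [AddCommGroup V] [Module F V] [AddCommGroup W] [Module K W] [Module F W] [IsScalarTower F K W]
  [TopologicalSpace W] [IsTopologicalAddGroup W] [ContinuousSMul K W]

/-- Approximation of orthogonal families by global orthogonal families. -/
lemma exists_orthogonal_approx (ι : V →ₗ[F] W) (hι : DenseRange ι)
    (b : V →ₗ[F] V →ₗ[F] F) (B : W →ₗ[K] W →ₗ[K] K)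
    (hb : ∀ x y, b x y = b y x)
    (hB : Continuous fun p : W × W => B p.1 p.2)
    (hbB : ∀ x y, B (ι x) (ι y) = algebraMap F K (b x y)) :
    ∀ (k : ℕ) (u : Fin k → W), (∀ i j, i ≠ j → B (u i) (u j) = 0) → (∀ i, B (u i) (u i) ≠ 0) →
      ∀ s ∈ 𝓝 u, ∃ w : Fin k → V, (∀ i j, i ≠ j → b (w i) (w j) = 0) ∧ (fun i => ι (w i)) ∈ s := by
  intro k
  induction k with
  | zero =>
    intro u _ _ s hs
    refine ⟨fun i => i.elim0, fun i => i.elim0, ?_⟩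
    convert mem_of_mem_nhds hs
  | succ k ih =>
    intro u hu hn s hs
    let Φ : (Fin k → W) × W → (Fin (k+1) → W) := fun p =>
      Fin.snoc p.1 (p.2 - ∑ i, (B p.2 (p.1 i) * (B (p.1 i) (p.1 i))⁻¹) • p.1 i)
    let p₀ : (Fin k → W) × W := (fun i => u i.castSucc, u (Fin.last k))
    have hΦ0 : Φ p₀ = u := by
      have : ∑ i, (B p₀.2 (p₀.1 i) * (B (p₀.1 i) (p₀.1 i))⁻¹) • p₀.1 i = 0 := by
        refine Finset.sum_eq_zero fun i _ => ?_
        have : B (u (Fin.last k)) (u i.castSucc) = 0 := hu _ _ (Fin.castSucc_lt_last i).ne'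
        simp [p₀, this]
      simp only [Φ, this, sub_zero]
      ext i
      refine Fin.lastCases ?_ (fun j => ?_) i
      · simp [p₀]
      · simp [p₀]
    have hBc : ∀ f g : (Fin k → W) × W → W, Continuous f → Continuous g →
        Continuous fun p => B (f p) (g p) := fun f g hf hg => hB.comp (hf.prodMk hg)
    have hΦ : ContinuousAt Φ p₀ := by
      refine continuousAt_pi.2 fun i => ?_
      refine Fin.lastCases ?_ (fun j => ?_) i
      · simp only [Φ, Fin.snoc_last]
        refine continuousAt_snd.sub (tendsto_finsetSum _ fun j _ => ?_)
        refine ContinuousAt.smul (ContinuousAt.mul ?_ (ContinuousAt.inv₀ ?_ (hn j.castSucc))) ?_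
        · exact (hBc _ _ continuous_snd (by fun_prop)).continuousAt
        · exact (hBc _ _ (by fun_prop) (by fun_prop)).continuousAt
        · fun_prop
      · simp only [Φ, Fin.snoc_castSucc]
        fun_prop
    have hs' : Φ ⁻¹' s ∈ 𝓝 p₀ := hΦ.preimage_mem_nhds (by rwa [hΦ0])
    rw [nhds_prod_eq, mem_prod_iff] at hs'
    obtain ⟨s1, hs1, s2, hs2, hss⟩ := hs'
    have hne : {w : Fin k → W | ∀ i, B (w i) (w i) ≠ 0} ∈ 𝓝 p₀.1 := by
      refine eventually_all.2 fun i => ?_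
      have hc : Continuous fun w : Fin k → W => B (w i) (w i) :=
        hB.comp (f := fun w : Fin k → W => (w i, w i)) (by fun_prop)
      exact hc.continuousAt.eventually_ne (hn i.castSucc)
    obtain ⟨w, hw, hws⟩ := ih p₀.1
      (fun i j hij => hu _ _ (fun h => hij (Fin.castSucc_injective _ h)))
      (fun i => hn _) _ (inter_mem hs1 hne)
    obtain ⟨x, hx⟩ := hι.exists_mem_open isOpen_interior
      ⟨_, mem_interior_iff_mem_nhds.2 hs2⟩
    have hx := interior_subset hx
    have hwn : ∀ i, b (w i) (w i) ≠ 0 := fun i h => hws.2 i (by simp [hbB, h])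
    set y : V := x - ∑ i, (b x (w i) * (b (w i) (w i))⁻¹) • w i with hy
    have hyw : ∀ j, b y (w j) = 0 := by
      intro j
      rw [hy, map_sub, LinearMap.sub_apply, map_sum, LinearMap.sum_apply,
        Finset.sum_eq_single j]
      · simp [hwn j]
      · intro i _ hij
        simp [hw i j hij]
      · simp
    refine ⟨Fin.snoc w y, ?_, ?_⟩
    · intro i j
      refine Fin.lastCases ?_ (fun i => ?_) i <;> refine Fin.lastCases ?_ (fun j => ?_) j
      · simp
      · simpa using fun _ => hyw j
      · simpa [hb (w i) y] using hyw i
      · intro h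
        simpa using hw i j (fun h' => h (by rw [h']))
    · have := hss (Set.mk_mem_prod hws.1 hx)
      have h' : (fun i => ι ((Fin.snoc w y : Fin (k+1) → V) i)) = Φ (fun i => ι (w i), ι x) := ?_
      · rw [h']; exact this
      ext i
      refine Fin.lastCases ?_ (fun j => ?_) i
      · simp only [Φ, Fin.snoc_last, hy, map_sub, map_sum, LinearMap.map_smul, hbB]
        congr 1
        refine Finset.sum_congr rfl fun i _ => ?_
        rw [← map_inv₀ (algebraMap F K), ← map_mul, algebraMap_smul]
      · simp [Φ]

end GS

/-- The image of `V` is dense in `K ⊗ V` if `F` is dense in `K`. -/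
lemma denseRange_mk {F K V : Type} [Field F] [Field K] [Algebra F K] [TopologicalSpace K]
    [IsTopologicalRing K] [AddCommGroup V] [Module F V]
    [TopologicalSpace (K ⊗[F] V)] [IsTopologicalAddGroup (K ⊗[F] V)] [ContinuousSMul K (K ⊗[F] V)]
    (hd : DenseRange (algebraMap F K)) :
    DenseRange (TensorProduct.mk F K V 1) := by
  let S : AddSubgroup (K ⊗[F] V) := (TensorProduct.mk F K V 1).toAddMonoidHom.range
  have key : ∀ x : K ⊗[F] V, x ∈ S.topologicalClosure := by
    intro x
    induction x with
    | zero => exact zero_mem _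
    | add x y hx hy => exact add_mem hx hy
    | tmul a m =>
      have hc : Continuous fun a : K => a • ((1 : K) ⊗ₜ[F] m) := by fun_prop
      have := hc.range_subset_closure_image_dense hd ⟨a, rfl⟩
      beta_reduce at this
      rw [TensorProduct.smul_tmul', smul_eq_mul, mul_one] at this
      refine closure_mono ?_ this
      rintro _ ⟨_, ⟨r, rfl⟩, rfl⟩
      refine ⟨r • m, ?_⟩
      simp [TensorProduct.smul_tmul', Algebra.smul_def]
  exact fun x => key x


/-- Abstract version of the main theorem. -/
theorem abstract_main {F K V W : Type} [Field F] [Field K] [Algebra F K] [TopologicalSpace K]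
    [IsTopologicalRing K] [ContinuousInv₀ K] [T1Space K]
    [AddCommGroup V] [Module F V] [AddCommGroup W] [Module K W] [Module F W] [IsScalarTower F K W]
    [FiniteDimensional K W] [TopologicalSpace W] [IsModuleTopology K W] [IsTopologicalAddGroup W]
    (h2 : (2 : K) ≠ 0) (hsq : ∀ᶠ x in 𝓝 (1 : K), ∃ c : K, c * c = x)
    (q : QuadraticForm K W) (ι : V →ₗ[F] W) (hι : DenseRange ι)
    (b : V →ₗ[F] V →ₗ[F] F) (hb : ∀ x y, b x y = b y x)
    (hbB : ∀ x y, q.polarBilin (ι x) (ι y) = algebraMap F K (b x y))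
    (U' : Submodule K W)
    (hU' : ∀ x ∈ U', (∀ y ∈ U', QuadraticMap.polar q x y = 0) → x = 0) :
    ∃ U : Submodule F V, ∃ e : ↥(Submodule.span K (ι '' (U : Set V))) ≃ₗ[K] ↥U',
      ∀ x, q ((e x : W)) = q (x : W) := by
  classical
  let _ : Invertible (2 : K) := invertibleOfNonzero h2
  obtain ⟨B, hBdef⟩ : ∃ B : W →ₗ[K] W →ₗ[K] K, B = q.polarBilin := ⟨_, rfl⟩
  have hBp : ∀ x y, B x y = QuadraticMap.polar q x y := fun x y => by rw [hBdef]; rfl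
  rw [← hBdef] at hbB
  have hBQ : ∀ x, B x x = 2 * q x := fun x => by
    simp [hBdef]
  have hB : Continuous fun p : W × W => B p.1 p.2 :=
    IsModuleTopology.continuous_bilinear_of_finite_left B
  have hsymm : ∀ x y, B x y = B y x := fun x y => by
    rw [hBp, hBp, QuadraticMap.polar_comm]
  let B' : LinearMap.BilinForm (K) U' := B.domRestrict₁₂ U' U'
  have hB's : LinearMap.IsSymm B' := ⟨fun x y => hsymm _ _⟩
  obtain ⟨u, hu⟩ := LinearMap.BilinForm.exists_orthogonal_basis (V := U') (K := K) (B := B') hB's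
  have hun : ∀ i, B (u i) (u i) ≠ 0 := by
    refine hu.not_isOrtho_basis_self_of_separatingLeft ?_
    intro x hx
    exact Subtype.ext (hU' x x.2 fun y hy => (hBp _ _).symm.trans (hx ⟨y, hy⟩))
  have huo : ∀ i j, i ≠ j → B (u i) (u j) = 0 := fun i j hij => hu hij
  have hs : {w : Fin (Module.finrank (K) U') → W |
      ∀ i, (B (w i) (w i) ≠ 0) ∧ ∃ c, c * c = B (w i) (w i) / B (u i) (u i)} ∈
      nhds (fun i => (u i : W)) := by
    refine Filter.eventually_all.2 fun i => ?_
    have hc : Continuous fun w : Fin (Module.finrank (K) U') → W => B (w i) (w i) :=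
      hB.comp (f := fun w : Fin (Module.finrank (K) U') → W => (w i, w i))
        ((continuous_apply i).prodMk (continuous_apply i))
    refine (hc.continuousAt.eventually_ne (hun i)).and ?_
    have ht : Filter.Tendsto (fun w : Fin (Module.finrank (K) U') → W =>
        B (w i) (w i) / B (u i) (u i)) (nhds (fun i => (u i : W))) (nhds 1) := by
      have := (hc.div_const (B (u i) (u i))).tendsto (fun i => (u i : W))
      rwa [div_self (hun i)] at this
    exact ht.eventually hsq
  obtain ⟨w, hwo, hws⟩ := exists_orthogonal_approx ι hι b B
    hb hB hbB _ (fun i => (u i : W)) huo hun _ hs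
  choose hwn c hc using hws
  have hc0 : ∀ i, IsUnit (c i) := fun i => by
    rw [isUnit_iff_ne_zero]
    intro h
    have := hc i
    rw [h, zero_mul] at this
    exact div_ne_zero (hwn i) (hun i) this.symm
  have hwo' : ∀ i j, i ≠ j → B (ι (w i)) (ι (w j)) = 0 := fun i j hij => by
    rw [hbB, hwo i j hij, map_zero]
  have hli : LinearIndependent (K) (fun i => ι (w i)) :=
    LinearMap.BilinForm.linearIndependent_of_iIsOrtho (B := B)
      (fun i j hij => hwo' i j hij) hwn
  have hspan : Submodule.span (K) (ι '' (Submodule.span F (Set.range w) : Set V))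
      = Submodule.span (K) (Set.range fun i => ι (w i)) := by
    have h1 : ι '' (Submodule.span F (Set.range w) : Set V)
        = (Submodule.span F (Set.range fun i => ι (w i)) : Set (W)) := by
      have := Submodule.map_span ι (Set.range w)
      rw [← Set.range_comp] at this
      have h := congrArg (fun S : Submodule F (W) => (S : Set (W))) this
      exact h
    rw [h1, Submodule.span_span_of_tower]
  let bw := (Module.Basis.span hli).map (LinearEquiv.ofEq _ _ hspan.symm)
  have hbw : ∀ i, (bw i : W) = ι (w i) := fun i => by
    simp [bw, Module.Basis.span_apply]
  refine ⟨Submodule.span F (Set.range w), bw.equiv (u.isUnitSMul hc0) (Equiv.refl _), ?_⟩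
  set e := bw.equiv (u.isUnitSMul hc0) (Equiv.refl _) with he
  have hee : ∀ i, (e (bw i) : W) = c i • (u i : W) := fun i => by
    rw [he, Module.Basis.equiv_apply, Module.Basis.isUnitSMul_apply]
    rfl
  let S := Submodule.span (K) (ι '' (Submodule.span F (Set.range w) : Set V))
  have hform : B.compl₁₂ (U'.subtype ∘ₗ e.toLinearMap) (U'.subtype ∘ₗ e.toLinearMap)
      = B.compl₁₂ S.subtype S.subtype := by
    refine bw.ext fun i => bw.ext fun j => ?_
    change B (e (bw i) : W) (e (bw j) : W) = B (bw i : W) (bw j : W)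
    rw [hee, hee, hbw, hbw]
    simp only [map_smul, LinearMap.smul_apply, smul_eq_mul]
    by_cases hij : i = j
    · subst hij
      rw [← mul_assoc, hc i, div_mul_cancel₀ _ (hun i)]
    · rw [huo i j hij, hwo' i j hij, mul_zero, mul_zero]
  intro x
  have h := LinearMap.congr_fun (LinearMap.congr_fun hform x) x
  change B (e x : W) (e x : W) = B (x : W) (x : W) at h
  rw [hBQ, hBQ] at h
  exact mul_left_cancel₀ h2 h

end Approx

/-- Let `F` be a number field, `V` a nondegenerate quadratic space
over `F`, and `𝔭` a finite place of `F` with completion `F_𝔭`.  For every nondegenerate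
`F_𝔭`-subspace `U'` of `V_𝔭 = F_𝔭 ⊗_F V` there exists an `F`-subspace `U` of `V` such
that `U_𝔭 = F_𝔭 ⊗_F U` is isometric to `U'` as a quadratic space over `F_𝔭`. -/
theorem exists_subspace_with_isometric_completion
    (F : Type) [Field F] [NumberField F]
    {V : Type} [AddCommGroup V] [Module F V] [FiniteDimensional F V]
    (Q : QuadraticForm F V) (hQ : Nondeg Q)
    (v : HeightOneSpectrum (NumberField.RingOfIntegers F))
    (U' : Submodule (Fv F v) (Vv F V v))
    (hU' : ∀ x ∈ U', (∀ y ∈ U', QuadraticMap.polar (⇑(Qv F Q v)) x y = 0) → x = 0) :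
    ∃ U : Submodule F V,
      ∃ e : ↥(Submodule.span (Fv F v) (toVv F v '' (U : Set V))) ≃ₗ[Fv F v] ↥U',
        ∀ x, Qv F Q v ((e x : Vv F V v)) = Qv F Q v (x : Vv F V v) := by
  have h2 : (2 : Fv F v) ≠ 0 := by
    have := (algebraMap F (Fv F v)).injective.ne (two_ne_zero (α := F))
    rwa [map_ofNat, map_zero] at this
  let _ : TopologicalSpace (Vv F V v) := moduleTopology (Fv F v) (Vv F V v)
  have : IsModuleTopology (Fv F v) (Vv F V v) := ⟨rfl⟩
  have : IsTopologicalAddGroup (Vv F V v) := IsModuleTopology.topologicalAddGroup (Fv F v) _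
  let ι : V →ₗ[F] Vv F V v := TensorProduct.mk F (Fv F v) V 1
  have hι : DenseRange ι := Approx.denseRange_mk (HeightOneSpectrum.denseRange_algebraMap F v)
  let b : V →ₗ[F] V →ₗ[F] F := Q.polarBilin
  have hbB : ∀ x y, (Qv F Q v).polarBilin (ι x) (ι y) = algebraMap F (Fv F v) (b x y) := by
    intro x y
    have hq : ∀ z : V, Qv F Q v (ι z) = algebraMap F (Fv F v) (Q z) := fun z => by
      let _ : Invertible (2 : F) := invertibleOfNonzero two_ne_zero
      have := QuadraticForm.baseChange_tmul (A := Fv F v) Q (1 : Fv F v) z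
      rw [mul_one, Algebra.smul_def, mul_one] at this
      exact this
    simp only [b, QuadraticMap.polarBilin_apply_apply, QuadraticMap.polar, ← map_add ι, hq,
      map_sub]
  exact Approx.abstract_main h2 (Approx.eventually_square F v) (Qv F Q v) ι hι b
    (fun x y => QuadraticMap.polar_comm _ _ _) hbB U' hU'
end
end
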